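/- arXiv:1806.07107 — 6 statements merged into one kernel-verified Lean document; each statement's English description precedes it below -/
import Mathlib

section
/- Let p be a prime and let f be a nonzero Laurent polynomial over F_p in two variables all of whose line polynomial factors are in the same direction. If c : ℤ² → F_p is annihilated by f and has low complexity, i.e., there is a finite nonempty set D ⊆ ℤ² such that the number of distinct D-patterns of c is at most |D|, then c is periodic. -/
/-- Laurent polynomials over `R` in two variables: finitely supported functions
`ℤ² → R`, multiplied by convolution. -/
abbrev LP (R : Type*) [CommRing R] := AddMonoidAlgebra R (ℤ × ℤ)

/-- `f` annihilates the configuration `c` if the formal product of `f` with the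
power series of `c` is the zero power series. -/
def Annihilates {R : Type*} [CommRing R] (f : LP R) (c : ℤ × ℤ → R) : Prop :=
  ∀ n : ℤ × ℤ, ∑ m ∈ f.coeff.support, f.coeff m * c (n - m) = 0

/-- The set of `D`-patterns of `c`. -/
def Patterns {R : Type*} (c : ℤ × ℤ → R) (D : Finset (ℤ × ℤ)) : Set (D → R) :=
  Set.range fun t : ℤ × ℤ => fun d : D => c (t + d.1)

/-- `c` has low complexity with respect to some finite nonempty shape. -/
def LowComplexity {R : Type*} (c : ℤ × ℤ → R) : Prop :=
  ∃ D : Finset (ℤ × ℤ), D.Nonempty ∧ (Patterns c D).ncard ≤ D.card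

/-- `t` is a period vector of `c`. -/
def IsPeriodVector {R : Type*} (c : ℤ × ℤ → R) (t : ℤ × ℤ) : Prop :=
  t ≠ 0 ∧ ∀ n : ℤ × ℤ, c (n + t) = c n

/-- `c` is periodic. -/
def Periodic {R : Type*} (c : ℤ × ℤ → R) : Prop :=
  ∃ t : ℤ × ℤ, IsPeriodVector c t

/-- `c` is two-periodic: it has two linearly independent period vectors. -/
def TwoPeriodic {R : Type*} (c : ℤ × ℤ → R) : Prop :=
  ∃ t₁ t₂ : ℤ × ℤ, IsPeriodVector c t₁ ∧ IsPeriodVector c t₂ ∧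
    t₁.1 * t₂.2 - t₁.2 * t₂.1 ≠ 0

/-- `f` is a line polynomial in direction `u`: its support has at least two elements
and lies on a line `{n + r • u : r ∈ ℚ}`. -/
def IsLinePoly {R : Type*} [CommRing R] (u : ℤ × ℤ) (f : LP R) : Prop :=
  1 < f.coeff.support.card ∧ ∃ n : ℤ × ℤ, ∀ m ∈ f.coeff.support, ∃ r : ℚ,
    (m.1 : ℚ) = n.1 + r * u.1 ∧ (m.2 : ℚ) = n.2 + r * u.2

/-- A finite set `D ⊆ ℤ²` has an outer edge perpendicular to `v`. -/
def HasOuterEdge (D : Finset (ℤ × ℤ)) (v : ℤ × ℤ) : Prop :=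
  ∃ x ∈ D, (∀ y ∈ D, 0 ≤ (y.1 - x.1) * v.1 + (y.2 - x.2) * v.2) ∧
    ∃ y₁ ∈ D, ∃ y₂ ∈ D, y₁ ≠ y₂ ∧
      (y₁.1 - x.1) * v.1 + (y₁.2 - x.2) * v.2 = 0 ∧
      (y₂.1 - x.1) * v.1 + (y₂.2 - x.2) * v.2 = 0

/-!
Low complexity gives, by counting equations and unknowns, a nonzero integer annihilator `g` of the
indicator of each value of `c`. As `g ^ q ≡ g(X ^ q)` modulo a prime `q` and `g(X ^ q)` acts on a
bounded configuration with values bounded independently of `q`, all `g(X ^ (1 + r * k))` annihilate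
that indicator, for a suitable `r`. Interpolation in `k` turns these into a product of differences
of distinct monomials, and a product of such products annihilates `c` itself.

Let now `P` be a prime ideal containing the annihilator ideal of `c`. It contains `X ^ t - 1` for
some `t ≠ 0`; complete the primitive vector `v` along `t` to a basis `v, w` of `ℤ²`. Modulo `P`,
`X ^ v` has finite order. If `X ^ w` is algebraic over the finite base field, then it has finite
order too, and so does every monomial; otherwise `f ∈ P` forces the minimal polynomial of `X ^ v`
modulo `P` to divide `f`, so `v` is the direction of the line polynomial factors of `f`. In either
case `X ^ u` has finite order modulo `P`, where `u` is that direction. Since there are only finitely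
many minimal primes over the annihilator ideal, a power of some `X ^ (k • u) - 1` annihilates `c`,
and in characteristic `p` a `p ^ n`-th power of it is again of this form.
-/

lemma sum_single_coeff {R M : Type*} [Semiring R] (f : AddMonoidAlgebra R M) :
    ∑ m ∈ f.coeff.support, AddMonoidAlgebra.single m (f.coeff m) = f :=
  AddMonoidAlgebra.sum_coeff_single f

section Convolution

variable {R : Type*} [CommRing R] {G : Type*} [AddCommGroup G]

variable (R) in
/-- The monomial `X ^ t` of the group algebra `R[G]`. -/
noncomputable def monom (t : G) : AddMonoidAlgebra R G :=
  AddMonoidAlgebra.single t 1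

lemma monom_zero : monom R (0 : G) = 1 :=
  rfl

lemma monom_add (s t : G) : monom R (s + t) = monom R s * monom R t := by
  simp [monom, AddMonoidAlgebra.single_mul_single]

lemma monom_nsmul (n : ℕ) (t : G) : monom R (n • t) = monom R t ^ n := by
  simp [monom, AddMonoidAlgebra.single_pow]

lemma monom_neg_mul_monom (t : G) : monom R (-t) * monom R t = 1 := by
  rw [← monom_add, neg_add_cancel, monom_zero]

lemma isUnit_monom (t : G) : IsUnit (monom R t) :=
  .of_mul_eq_one_right _ (monom_neg_mul_monom t)

lemma single_eq_smul_monom (t : G) (a : R) : AddMonoidAlgebra.single t a = a • monom R t := by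
  simp [monom]

variable (R G) in
/-- The action of `G` on configurations `G → R` by translation. -/
def translation : Multiplicative G →* Module.End R (G → R) where
  toFun t := LinearMap.funLeft R R (· - t.toAdd)
  map_one' := by ext; simp
  map_mul' s t := by
    refine LinearMap.ext fun c => funext fun n => ?_
    simp [LinearMap.funLeft_apply, sub_sub]

/-- The formal product of an element of `R[G]` with a configuration `G → R`, packaged as the
module structure on configurations that linearly extends translation. -/
noncomputable def convolve : AddMonoidAlgebra R G →ₐ[R] Module.End R (G → R) :=
  AddMonoidAlgebra.lift R _ _ (translation R G)

lemma convolve_single (t : G) (a : R) (c : G → R) (n : G) :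
    convolve (AddMonoidAlgebra.single t a) c n = a * c (n - t) := by
  simp [convolve, translation, LinearMap.funLeft_apply]

lemma convolve_monom (t : G) (c : G → R) (n : G) : convolve (monom R t) c n = c (n - t) := by
  simp [monom, convolve_single]

lemma convolve_sum_single {ι : Type*} (s : Finset ι) (t : ι → G) (a : ι → R) (c : G → R) (n : G) :
    convolve (∑ i ∈ s, AddMonoidAlgebra.single (t i) (a i)) c n
      = ∑ i ∈ s, a i * c (n - t i) := by
  simp [map_sum, LinearMap.sum_apply, convolve_single]

/-- The ideal of the elements of `R[G]` whose formal product with `c` vanishes. -/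
noncomputable def annihilator (c : G → R) : Ideal (AddMonoidAlgebra R G) where
  carrier := {f | convolve f c = 0}
  zero_mem' := by simp
  add_mem' hf hg := by simp_all
  smul_mem' f g hg := by simp_all

lemma mem_annihilator {c : G → R} {f : AddMonoidAlgebra R G} :
    f ∈ annihilator c ↔ convolve f c = 0 :=
  Iff.rfl

lemma annihilates_iff_mem_annihilator {f : LP R} {c : ℤ × ℤ → R} :
    Annihilates f c ↔ f ∈ annihilator c := by
  simp only [Annihilates, mem_annihilator, funext_iff, Pi.zero_apply, ← convolve_sum_single,
    sum_single_coeff]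

lemma monom_sub_one_mem_annihilator {c : G → R} {t : G} :
    monom R t - 1 ∈ annihilator c ↔ ∀ n, c (n + t) = c n := by
  simp only [mem_annihilator, map_sub, map_one, LinearMap.sub_apply, Module.End.one_apply,
    sub_eq_zero, funext_iff, convolve_monom]
  rw [← (Equiv.addRight t).forall_congr_right]
  simp only [Equiv.coe_addRight, add_sub_cancel_right, eq_comm]

lemma mem_annihilator_of_smul_mem [NoZeroDivisors R] {c : G → R} {a : R} (ha : a ≠ 0)
    {f : AddMonoidAlgebra R G} (h : a • f ∈ annihilator c) : f ∈ annihilator c := by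
  rw [mem_annihilator, map_smul, LinearMap.smul_apply] at h
  exact (smul_eq_zero.1 h).resolve_left ha

lemma convolve_mapRingHom {S : Type*} [CommRing S] (φ : R →+* S) (f : AddMonoidAlgebra R G)
    (c : G → R) :
    convolve (AddMonoidAlgebra.mapRingHom G φ f) (φ ∘ c) = φ ∘ convolve f c := by
  induction f using AddMonoidAlgebra.induction_linear with
  | zero => ext; simp
  | add f g hf hg => ext; simp [hf, hg]
  | single t a => ext; simp [convolve_single]

lemma mapRingHom_mem_annihilator {S : Type*} [CommRing S] (φ : R →+* S)
    {f : AddMonoidAlgebra R G} {c : G → R} (hf : f ∈ annihilator c) :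
    AddMonoidAlgebra.mapRingHom G φ f ∈ annihilator (φ ∘ c) := by
  rw [mem_annihilator, convolve_mapRingHom, mem_annihilator.1 hf]
  ext
  simp

end Convolution

section Frobenius

variable {G : Type*} [AddCommGroup G]

/-- The substitution `X ^ t ↦ X ^ (n • t)`. -/
noncomputable def expand (n : ℕ) : AddMonoidAlgebra ℤ G →+* AddMonoidAlgebra ℤ G :=
  AddMonoidAlgebra.mapDomainRingHom ℤ (nsmulAddMonoidHom n : G →+ G)

lemma expand_single (n : ℕ) (t : G) (a : ℤ) :
    expand n (AddMonoidAlgebra.single t a) = AddMonoidAlgebra.single (n • t) a := by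
  simp [expand]

lemma expand_eq_sum (n : ℕ) (g : AddMonoidAlgebra ℤ G) :
    expand n g = ∑ m ∈ g.coeff.support, AddMonoidAlgebra.single (n • m) (g.coeff m) := by
  conv_lhs => rw [← sum_single_coeff g]
  simp only [map_sum, expand_single]

lemma expand_one (g : AddMonoidAlgebra ℤ G) : expand 1 g = g := by
  simp only [expand_eq_sum, one_smul, sum_single_coeff]

lemma expand_expand (m n : ℕ) (g : AddMonoidAlgebra ℤ G) :
    expand m (expand n g) = expand (m * n) g := by
  simp only [expand_eq_sum n, expand_eq_sum (m * n), map_sum, expand_single, mul_smul]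

lemma natCast_dvd_expand_sub_pow {q : ℕ} (hq : q.Prime) (g : AddMonoidAlgebra ℤ G) :
    (q : AddMonoidAlgebra ℤ G) ∣ expand q g - g ^ q := by
  induction g using AddMonoidAlgebra.induction_linear with
  | zero => simp [hq.ne_zero]
  | add f g hf hg =>
    obtain ⟨r, hr⟩ := exists_add_pow_prime_eq hq f g
    have hsplit : expand q (f + g) - (f + g) ^ q
        = (expand q f - f ^ q) + (expand q g - g ^ q) - q * (f * g * r) := by
      rw [hr, map_add]
      ring
    rw [hsplit]
    exact ((dvd_add hf hg).sub (dvd_mul_right _ _))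
  | single t a =>
    obtain ⟨b, hb⟩ := Int.prime_dvd_pow_self_sub hq a
    refine ⟨AddMonoidAlgebra.single (q • t) (-b), ?_⟩
    rw [expand_single, AddMonoidAlgebra.single_pow, ← AddMonoidAlgebra.single_sub,
      AddMonoidAlgebra.natCast_def, AddMonoidAlgebra.single_mul_single, zero_add]
    congr 1
    linear_combination - hb

lemma expand_mem_annihilator_of_prime {C : G → ℤ} {g : AddMonoidAlgebra ℤ G}
    (hg : g ∈ annihilator C) {q : ℕ} (hq : q.Prime)
    (hbound : ∀ t, |convolve (expand q g) C t| < q) : expand q g ∈ annihilator C := by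
  obtain ⟨r, hr⟩ := natCast_dvd_expand_sub_pow hq g
  have hpow : convolve (g ^ q) C = 0 := Ideal.pow_mem_of_mem _ hg _ hq.pos
  have hmul : convolve (expand q g) C = q • convolve r C := by
    rw [sub_eq_iff_eq_add.1 hr, map_add, LinearMap.add_apply, hpow, add_zero, map_mul,
      map_natCast, Module.End.mul_apply, Module.End.natCast_apply]
  funext t
  refine Int.eq_zero_of_abs_lt_dvd ⟨convolve r C t, ?_⟩ (hbound t)
  rw [hmul, Pi.smul_apply, nsmul_eq_mul]

lemma abs_convolve_expand_le {C : G → ℤ} {B : ℤ} (hB : ∀ n, |C n| ≤ B)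
    (g : AddMonoidAlgebra ℤ G) (n : ℕ) (t : G) :
    |convolve (expand n g) C t| ≤ ∑ m ∈ g.coeff.support, |g.coeff m| * B := by
  rw [expand_eq_sum, convolve_sum_single]
  refine (Finset.abs_sum_le_sum_abs _ _).trans (Finset.sum_le_sum fun m _ => ?_)
  rw [abs_mul]
  exact mul_le_mul_of_nonneg_left (hB _) (abs_nonneg _)

lemma expand_mem_annihilator_of_lt_primes {C : G → ℤ} {g : AddMonoidAlgebra ℤ G}
    (hg : g ∈ annihilator C) {M : ℤ} (hM : ∀ n t, |convolve (expand n g) C t| ≤ M)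
    {n : ℕ} (hn : n ≠ 0) (hprimes : ∀ q : ℕ, q.Prime → q ∣ n → M < q) :
    expand n g ∈ annihilator C := by
  induction n using induction_on_primes with
  | zero => exact absurd rfl hn
  | one => rwa [expand_one]
  | prime_mul q n hq ih =>
    have hexpand := ih (right_ne_zero_of_mul hn) fun q' hq' hdvd =>
      hprimes q' hq' (hdvd.mul_left q)
    rw [← expand_expand]
    refine expand_mem_annihilator_of_prime hexpand hq fun t => ?_
    rw [expand_expand]
    exact (hM _ t).trans_lt (hprimes q hq (dvd_mul_right _ _))

lemma exists_expand_one_add_mul_mem_annihilator {C : G → ℤ} {B : ℤ} (hB : ∀ n, |C n| ≤ B)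
    {g : AddMonoidAlgebra ℤ G} (hg : g ∈ annihilator C) :
    ∃ r : ℕ, r ≠ 0 ∧ ∀ k : ℕ, expand (1 + r * k) g ∈ annihilator C := by
  set M := ∑ m ∈ g.coeff.support, |g.coeff m| * B
  refine ⟨M.toNat.factorial, M.toNat.factorial_ne_zero, fun k => ?_⟩
  refine expand_mem_annihilator_of_lt_primes hg (abs_convolve_expand_le hB g) (by omega)
    fun q hq hdvd => ?_
  by_contra! hle
  have hfact : q ∣ M.toNat.factorial := hq.dvd_factorial.2 (by omega)
  exact hq.one_lt.ne' (Nat.dvd_one.1 ((Nat.dvd_add_left (hfact.mul_right k)).1 hdvd))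

end Frobenius

section DifferenceProducts

variable {R : Type*} [CommRing R] {G : Type*} [AddCommGroup G]

variable (R G) in
/-- The products of differences of distinct monomials, a shape of annihilator that is preserved by
a change of coefficients, whereas a nonzero element of `ℤ[G]` may well reduce to zero. -/
noncomputable def differenceProducts : Submonoid (AddMonoidAlgebra R G) :=
  .closure {h | ∃ s t : G, s ≠ t ∧ h = monom R s - monom R t}

lemma mapRingHom_mem_differenceProducts {S : Type*} [CommRing S] (φ : R →+* S)
    {h : AddMonoidAlgebra R G} (hh : h ∈ differenceProducts R G) :
    AddMonoidAlgebra.mapRingHom G φ h ∈ differenceProducts S G := by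
  induction hh using Submonoid.closure_induction with
  | mem h hh =>
    obtain ⟨s, t, hst, rfl⟩ := hh
    exact Submonoid.subset_closure ⟨s, t, hst, by simp [monom]⟩
  | one => simp
  | mul h h' _ _ ih ih' => simpa only [map_mul] using mul_mem ih ih'

lemma exists_monom_sub_one_mem_of_isPrime {P : Ideal (AddMonoidAlgebra R G)} [P.IsPrime]
    {h : AddMonoidAlgebra R G} (hh : h ∈ differenceProducts R G) (hP : h ∈ P) :
    ∃ t : G, t ≠ 0 ∧ monom R t - 1 ∈ P := by
  by_contra! hnone
  suffices differenceProducts R G ≤ P.primeCompl from this hh hP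
  refine (Submonoid.closure_le).2 ?_
  rintro _ ⟨s, t, hst, rfl⟩ hmem
  refine hnone (s - t) (sub_ne_zero.2 hst) ((Ideal.unit_mul_mem_iff_mem P (isUnit_monom t)).1 ?_)
  rwa [mul_sub, ← monom_add, add_sub_cancel, mul_one]

open Polynomial in
lemma sum_mul_eval_mem {A ι : Type*} [CommRing A] {I : Ideal A} {s : Finset ι} {y z : ι → A}
    (h : ∀ k : ℕ, ∑ i ∈ s, y i * z i ^ k ∈ I) (Q : A[X]) :
    ∑ i ∈ s, y i * Q.eval (z i) ∈ I := by
  simp only [eval_eq_sum_range, Finset.mul_sum]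
  rw [Finset.sum_comm]
  refine Ideal.sum_mem _ fun k _ => ?_
  simp only [mul_left_comm _ (Q.coeff k), ← Finset.mul_sum]
  exact I.mul_mem_left _ (h k)

open Polynomial in
/-- Lagrange interpolation: the power sums are combined along the polynomial that vanishes at
every node but `z j`. -/
lemma mul_prod_sub_mem {A ι : Type*} [CommRing A] [DecidableEq ι] {I : Ideal A} {s : Finset ι}
    {y z : ι → A} (h : ∀ k : ℕ, ∑ i ∈ s, y i * z i ^ k ∈ I) {j : ι} (hj : j ∈ s) :
    y j * ∏ i ∈ s.erase j, (z j - z i) ∈ I := by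
  have hmem := sum_mul_eval_mem h (∏ i ∈ s.erase j, (X - C (z i)))
  simp only [eval_prod, eval_sub, eval_X, eval_C] at hmem
  rwa [Finset.sum_eq_single_of_mem j hj fun i hi hij => ?_] at hmem
  rw [Finset.prod_eq_zero (Finset.mem_erase.2 ⟨hij, hi⟩) (sub_self _), mul_zero]

theorem exists_mem_differenceProducts_mem_annihilator_of_abs_le [IsAddTorsionFree G] {C : G → ℤ}
    {B : ℤ} (hB : ∀ n, |C n| ≤ B) {g : AddMonoidAlgebra ℤ G} (hg0 : g ≠ 0)
    (hg : g ∈ annihilator C) : ∃ h ∈ differenceProducts ℤ G, h ∈ annihilator C := by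
  classical
  obtain ⟨r, hr, hexpand⟩ := exists_expand_one_add_mul_mem_annihilator hB hg
  obtain ⟨m₀, hm₀⟩ : g.coeff.support.Nonempty := by
    simpa [Finsupp.support_nonempty_iff] using hg0
  have hpower (k : ℕ) : ∑ m ∈ g.coeff.support,
      AddMonoidAlgebra.single m (g.coeff m) * monom ℤ (r • m) ^ k ∈ annihilator C := by
    convert hexpand k
    rw [expand_eq_sum]
    refine Finset.sum_congr rfl fun m _ => ?_
    rw [← monom_nsmul, monom, AddMonoidAlgebra.single_mul_single, mul_one, add_smul, one_smul,
      mul_comm r k, mul_smul]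
  have hprod := mul_prod_sub_mem hpower hm₀
  rw [single_eq_smul_monom, smul_mul_assoc] at hprod
  refine ⟨_, Submonoid.prod_mem _ fun m hm => Submonoid.subset_closure ⟨_, _, ?_, rfl⟩,
    (Ideal.unit_mul_mem_iff_mem _ (isUnit_monom m₀)).1
      (mem_annihilator_of_smul_mem (Finsupp.mem_support_iff.1 hm₀) hprod)⟩
  exact (nsmul_right_injective hr).ne (Finset.ne_of_mem_erase hm).symm

end DifferenceProducts

section LowComplexity

/-- There are more unknowns, namely the `|D| + 1` coefficients of an affine relation, than
equations, one for each pattern. -/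
lemma LowComplexity.exists_affine_relation {R : Type*} [Finite R] {c : ℤ × ℤ → R}
    (hc : LowComplexity c) (φ : R → ℤ) :
    ∃ (D : Finset (ℤ × ℤ)) (a : D → ℤ) (b : ℤ), a ≠ 0 ∧
      ∀ t : ℤ × ℤ, ∑ d : D, a d * φ (c (t + d)) = b := by
  obtain ⟨D, _, hcard⟩ := hc
  have : Fintype (Patterns c D) := .ofFinite _
  let column : Option D → Patterns c D → ℤ := fun o P => o.elim 1 fun d => φ (P.1 d)
  have hdependent : ¬ LinearIndependent ℤ column := fun h => by
    have hle := h.fintype_card_le_finrank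
    rw [← Nat.card_coe_set_eq, Nat.card_eq_fintype_card] at hcard
    simp only [Fintype.card_option, Fintype.card_coe, Module.finrank_pi] at hle
    omega
  obtain ⟨a, hsum, o, ho⟩ := Fintype.not_linearIndependent_iff.1 hdependent
  have hrel (t : ℤ × ℤ) : ∑ d : D, a (some d) * φ (c (t + d)) = - a none := by
    have hpattern := congrFun hsum ⟨_, t, rfl⟩
    simp only [Fintype.sum_option, Pi.smul_apply, Finset.sum_apply, Option.elim,
      column, smul_eq_mul, mul_one, Pi.zero_apply] at hpattern
    linarith
  refine ⟨D, fun d => a (some d), - a none, fun ha => ?_, hrel⟩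
  have hsome (d : D) : a (some d) = 0 := congrFun ha d
  cases o with
  | some d => exact ho (hsome d)
  | none => exact ho (by simpa [hsome] using hrel 0)

lemma LowComplexity.exists_ne_zero_mem_annihilator {R : Type*} [Finite R] {c : ℤ × ℤ → R}
    (hc : LowComplexity c) (φ : R → ℤ) :
    ∃ g : AddMonoidAlgebra ℤ (ℤ × ℤ), g ≠ 0 ∧ g ∈ annihilator (φ ∘ c) := by
  obtain ⟨D, a, b, ha, hrel⟩ := hc.exists_affine_relation φ
  obtain ⟨d₀, hd₀⟩ := Function.ne_iff.1 ha
  let g : AddMonoidAlgebra ℤ (ℤ × ℤ) := ∑ d : D, AddMonoidAlgebra.single (-d.1) (a d)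
  have hg : g ≠ 0 := fun h => hd₀ <| by
    have hcoeff : g.coeff (-d₀.1) = a d₀ := by simp [g, Finsupp.single_apply]
    rw [← hcoeff, h]
    rfl
  have hconst : convolve g (φ ∘ c) = fun _ => b := by
    funext t
    simp only [g, convolve_sum_single, sub_neg_eq_add, Function.comp_apply, hrel]
  have hmonom : monom ℤ ((1, 0) : ℤ × ℤ) - 1 ≠ 0 := by
    rw [sub_ne_zero, ← monom_zero]
    exact (AddMonoidAlgebra.single_left_injective one_ne_zero).ne (by simp)
  refine ⟨(monom ℤ (1, 0) - 1) * g, mul_ne_zero hmonom hg, ?_⟩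
  rw [mem_annihilator, map_mul, Module.End.mul_apply, hconst, ← mem_annihilator,
    monom_sub_one_mem_annihilator]
  exact fun _ => rfl

lemma mem_annihilator_of_forall_indicator {R G : Type*} [CommRing R] [Finite R] [DecidableEq R]
    [AddCommGroup G] {c : G → R} {h : AddMonoidAlgebra R G}
    (hind : ∀ x : R, h ∈ annihilator fun n => if c n = x then (1 : R) else 0) :
    h ∈ annihilator c := by
  have : Fintype R := .ofFinite R
  have hc : c = ∑ x : R, x • fun n => if c n = x then (1 : R) else 0 := by
    ext n
    simp
  rw [mem_annihilator, hc, map_sum]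
  exact Finset.sum_eq_zero fun x _ => by rw [map_smul, mem_annihilator.1 (hind x), smul_zero]

theorem LowComplexity.exists_mem_differenceProducts_mem_annihilator {R : Type*} [CommRing R]
    [Finite R] {c : ℤ × ℤ → R} (hc : LowComplexity c) :
    ∃ h ∈ differenceProducts R (ℤ × ℤ), h ∈ annihilator c := by
  classical
  have : Fintype R := .ofFinite R
  let indicator (x y : R) : ℤ := if y = x then 1 else 0
  have hind (x : R) : ∃ h ∈ differenceProducts ℤ (ℤ × ℤ), h ∈ annihilator (indicator x ∘ c) := by
    obtain ⟨g, hg0, hg⟩ := hc.exists_ne_zero_mem_annihilator (indicator x)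
    refine exists_mem_differenceProducts_mem_annihilator_of_abs_le (B := 1) (fun n => ?_) hg0 hg
    by_cases h : c n = x <;> simp [indicator, h]
  choose h hprod hann using hind
  refine ⟨_, mapRingHom_mem_differenceProducts (Int.castRingHom R)
    (Submonoid.prod_mem _ fun x (_ : x ∈ Finset.univ) => hprod x),
    mem_annihilator_of_forall_indicator fun x => ?_⟩
  have hmem : ∏ x, h x ∈ annihilator (indicator x ∘ c) :=
    Ideal.mem_of_dvd _ (Finset.dvd_prod_of_mem h (Finset.mem_univ x)) (hann x)
  convert mapRingHom_mem_annihilator (Int.castRingHom R) hmem using 2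
  funext n
  simp [indicator]

end LowComplexity

section FiniteOrder

variable {R : Type*} [CommRing R] {G : Type*} [AddCommGroup G]

/-- The exponents `t` for which `X ^ t` has finite order modulo `I`, that is, for which `I`
contains `X ^ (k • t) - 1` for some positive `k`. -/
noncomputable def finOrderExponents (I : Ideal (AddMonoidAlgebra R G)) : AddSubgroup G where
  carrier := {t | IsOfFinOrder (Ideal.Quotient.mk I (monom R t))}
  zero_mem' := by simp [monom_zero]
  add_mem' hs ht := by
    simpa only [Set.mem_ofPred_eq, monom_add, map_mul] using IsOfFinOrder.mul hs ht
  neg_mem' {t} ht := by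
    obtain ⟨k, hk, hpow⟩ := isOfFinOrder_iff_pow_eq_one.1 ht
    refine isOfFinOrder_iff_pow_eq_one.2 ⟨k, hk, ?_⟩
    simpa [mul_pow, hpow] using
      congrArg (Ideal.Quotient.mk I · ^ k) (monom_neg_mul_monom (R := R) t)

lemma mem_finOrderExponents {I : Ideal (AddMonoidAlgebra R G)} {t : G} :
    t ∈ finOrderExponents I ↔ IsOfFinOrder (Ideal.Quotient.mk I (monom R t)) :=
  Iff.rfl

lemma mem_finOrderExponents_iff_exists {I : Ideal (AddMonoidAlgebra R G)} {t : G} :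
    t ∈ finOrderExponents I ↔ ∃ k : ℕ, 0 < k ∧ monom R t ^ k - 1 ∈ I := by
  simp only [mem_finOrderExponents, isOfFinOrder_iff_pow_eq_one, ← map_pow,
    ← map_one (Ideal.Quotient.mk I), Ideal.Quotient.eq]

lemma mem_finOrderExponents_of_nsmul {I : Ideal (AddMonoidAlgebra R G)} {t : G} {d : ℕ}
    (hd : d ≠ 0) (h : d • t ∈ finOrderExponents I) : t ∈ finOrderExponents I := by
  rw [mem_finOrderExponents, monom_nsmul, map_pow] at h
  exact h.of_pow hd

/-- In characteristic `p`, a power of `X ^ k - 1` lying in `I` may be taken to have exponent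
`p ^ n`, and is then `X ^ (p ^ n * k) - 1`. -/
theorem exists_pow_sub_one_mem_of_forall_isPrime {A : Type*} [CommRing A] [IsNoetherianRing A]
    (p : ℕ) [Fact p.Prime] [CharP A p] {I : Ideal A} {z : A}
    (h : ∀ P : Ideal A, P.IsPrime → I ≤ P → ∃ k : ℕ, 0 < k ∧ z ^ k - 1 ∈ P) :
    ∃ k : ℕ, 0 < k ∧ z ^ k - 1 ∈ I := by
  have hfinite := I.finite_minimalPrimes_of_isNoetherianRing
  choose! k hk hmem using fun P (hP : P ∈ I.minimalPrimes) => h P hP.1.1 hP.1.2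
  set K := ∏ P ∈ hfinite.toFinset, k P
  have hradical : z ^ K - 1 ∈ I.radical := by
    rw [← Ideal.sInf_minimalPrimes, Ideal.mem_sInf]
    intro P hP
    obtain ⟨l, hl⟩ : k P ∣ K := Finset.dvd_prod_of_mem k (hfinite.mem_toFinset.2 hP)
    rw [hl, pow_mul]
    exact Ideal.mem_of_dvd _ (sub_one_dvd_pow_sub_one _ _) (hmem P hP)
  obtain ⟨n, hn⟩ := hradical
  have hp : p.Prime := Fact.out
  refine ⟨K * p ^ n, mul_pos (Finset.prod_pos fun P hP => hk P (hfinite.mem_toFinset.1 hP))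
    (pow_pos hp.pos n), ?_⟩
  rw [pow_mul, ← one_pow (p ^ n), ← sub_pow_char_pow]
  exact Ideal.mem_of_dvd _ (pow_dvd_pow _ (Nat.lt_pow_self hp.one_lt).le) hn

lemma mem_finOrderExponents_of_forall_isPrime [IsNoetherianRing R] (p : ℕ) [Fact p.Prime]
    [CharP R p] [AddGroup.FG G] {I : Ideal (AddMonoidAlgebra R G)} {t : G}
    (h : ∀ P : Ideal (AddMonoidAlgebra R G), P.IsPrime → I ≤ P → t ∈ finOrderExponents P) :
    t ∈ finOrderExponents I := by
  have : IsNoetherianRing (AddMonoidAlgebra R G) := Algebra.FiniteType.isNoetherianRing R _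
  have : CharP (AddMonoidAlgebra R G) p :=
    charP_of_injective_algebraMap (FaithfulSMul.algebraMap_injective R _) p
  simp only [mem_finOrderExponents_iff_exists] at h ⊢
  exact exists_pow_sub_one_mem_of_forall_isPrime p h

lemma isOfFinOrder_of_isIntegral {S : Type*} [Finite R] [CommRing S] [Algebra R S] {y : S}
    (hy : IsUnit y) (hintegral : IsIntegral R y) : IsOfFinOrder y := by
  obtain ⟨y, rfl⟩ := hy
  have : Module.Finite R (Algebra.adjoin R {(y : S)}) :=
    Algebra.finite_adjoin_simple_of_isIntegral hintegral
  have : Finite (Algebra.adjoin R {(y : S)}) := Module.finite_of_finite R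
  rw [Units.isOfFinOrder_val, ← finite_powers]
  refine Set.Finite.of_finite_image (f := Units.val) (Set.Finite.subset
    (Set.toFinite (Algebra.adjoin R {(y : S)} : Set S)) ?_) Units.val_injective.injOn
  rintro _ ⟨_, ⟨n, rfl⟩, rfl⟩
  simpa using pow_mem (Algebra.self_mem_adjoin_singleton R (y : S)) n

end FiniteOrder

section LinePolynomials

variable {R : Type*} [CommRing R]

lemma IsLinePoly.det_eq_zero {u v : ℤ × ℤ} {g : LP R} (hu : IsLinePoly u g)
    (hv : IsLinePoly v g) : v.1 * u.2 - v.2 * u.1 = 0 := by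
  obtain ⟨hcard, n, hn⟩ := hu
  obtain ⟨-, l, hl⟩ := hv
  obtain ⟨a, ha, b, hb, hab⟩ := Finset.one_lt_card.1 hcard
  obtain ⟨r, hr₁, hr₂⟩ := hn a ha
  obtain ⟨s, hs₁, hs₂⟩ := hn b hb
  obtain ⟨x, hx₁, hx₂⟩ := hl a ha
  obtain ⟨y, hy₁, hy₂⟩ := hl b hb
  have hxy : x - y ≠ 0 := fun h => by
    rw [sub_eq_zero.1 h] at hx₁ hx₂
    exact hab (Prod.ext (by exact_mod_cast hx₁.trans hy₁.symm)
      (by exact_mod_cast hx₂.trans hy₂.symm))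
  have hdet : (x - y) * (v.1 * u.2 - v.2 * u.1 : ℚ) = 0 := by
    linear_combination u.2 * (hr₁ - hs₁ - hx₁ + hy₁) - u.1 * (hr₂ - hs₂ - hx₂ + hy₂)
  exact_mod_cast (mul_eq_zero.1 hdet).resolve_left hxy

open Polynomial

lemma aeval_monom_eq_sum {G : Type*} [AddCommGroup G] (v : G) (Q : R[X]) :
    aeval (monom R v) Q
      = ∑ i ∈ Finset.range (Q.natDegree + 1), AddMonoidAlgebra.single (i • v) (Q.coeff i) := by
  simp only [aeval_eq_sum_range, single_eq_smul_monom, monom_nsmul]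

lemma coeff_aeval_monom {G : Type*} [AddCommGroup G] [IsAddTorsionFree G] {v : G} (hv : v ≠ 0)
    (Q : R[X]) (i : ℕ) : (aeval (monom R v) Q).coeff (i • v) = Q.coeff i := by
  rw [aeval_monom_eq_sum, AddMonoidAlgebra.coeff_sum, Finsupp.finsetSum_apply,
    Finset.sum_eq_single i]
  · simp
  · intro j _ hj
    exact Finsupp.single_eq_of_ne (((IsAddLeftRegular.all v).nsmul_injective hv).ne hj.symm)
  · intro hi
    simp [coeff_eq_zero_of_natDegree_lt (by simpa using hi)]

lemma exists_nsmul_eq_of_mem_support_aeval_monom {G : Type*} [AddCommGroup G] {v m : G}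
    {Q : R[X]} (hm : m ∈ (aeval (monom R v) Q).coeff.support) : ∃ i : ℕ, i • v = m := by
  rw [Finsupp.mem_support_iff, aeval_monom_eq_sum, AddMonoidAlgebra.coeff_sum,
    Finsupp.finsetSum_apply] at hm
  obtain ⟨i, _, hi⟩ := Finset.exists_ne_zero_of_sum_ne_zero hm
  exact ⟨i, by_contra fun hne => hi (Finsupp.single_eq_of_ne' hne)⟩

lemma isLinePoly_aeval_monom {v : ℤ × ℤ} (hv : v ≠ 0) {Q : R[X]} (h0 : Q.coeff 0 ≠ 0)
    (hdeg : Q.natDegree ≠ 0) : IsLinePoly v (aeval (monom R v) Q) := by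
  have hmem {i : ℕ} (hi : Q.coeff i ≠ 0) : i • v ∈ (aeval (monom R v) Q).coeff.support := by
    rwa [Finsupp.mem_support_iff, coeff_aeval_monom hv]
  have hlead : Q.coeff Q.natDegree ≠ 0 :=
    leadingCoeff_ne_zero.2 (ne_zero_of_natDegree_gt (Nat.pos_of_ne_zero hdeg))
  have hne : 0 • v ≠ Q.natDegree • v :=
    ((IsAddLeftRegular.all v).nsmul_injective hv).ne hdeg.symm
  refine ⟨Finset.one_lt_card.2 ⟨_, hmem h0, _, hmem hlead, hne⟩, 0, fun m hm => ?_⟩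
  obtain ⟨i, rfl⟩ := exists_nsmul_eq_of_mem_support_aeval_monom hm
  exact ⟨i, by simp, by simp⟩

end LinePolynomials

section UnimodularBasis

lemma eq_smul_add_smul_of_det_eq_one {v w : ℤ × ℤ} (hvw : v.1 * w.2 - v.2 * w.1 = 1)
    (t : ℤ × ℤ) : t = (t.1 * w.2 - t.2 * w.1) • v + (v.1 * t.2 - v.2 * t.1) • w := by
  ext
  · simp only [Prod.fst_add, Prod.smul_fst, smul_eq_mul]
    linear_combination (-t.1) * hvw
  · simp only [Prod.snd_add, Prod.smul_snd, smul_eq_mul]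
    linear_combination (-t.2) * hvw

lemma exists_nsmul_eq_and_det_eq_one {t : ℤ × ℤ} (ht : t ≠ 0) :
    ∃ (d : ℕ) (v w : ℤ × ℤ), d ≠ 0 ∧ t = d • v ∧ v.1 * w.2 - v.2 * w.1 = 1 := by
  have hpos : 0 < Int.gcd t.1 t.2 :=
    Int.gcd_pos_iff.2 <| by
      simpa only [Ne, Prod.ext_iff, not_and_or, Prod.fst_zero, Prod.snd_zero] using ht
  obtain ⟨d, a, b, hd, hab, ha, hb⟩ := Int.exists_gcd_one' hpos
  obtain ⟨x, y, hxy⟩ := Int.isCoprime_iff_gcd_eq_one.2 hab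
  exact ⟨d, (a, b), (-y, x), hd.ne', by ext <;> simp [ha, hb, mul_comm], by linarith⟩

open Polynomial

lemma exists_monom_mul_eq_aevalAeval {R : Type*} [CommRing R] {v w : ℤ × ℤ}
    (hvw : v.1 * w.2 - v.2 * w.1 = 1) (f : LP R) :
    ∃ (N : ℕ) (Q : R[X][X]),
      monom R (N • (v + w)) * f = aevalAeval (monom R v) (monom R w) Q := by
  induction f using AddMonoidAlgebra.induction_linear with
  | zero => exact ⟨0, 0, by simp⟩
  | add f₁ f₂ ih₁ ih₂ =>
    obtain ⟨N₁, Q₁, h₁⟩ := ih₁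
    obtain ⟨N₂, Q₂, h₂⟩ := ih₂
    refine ⟨N₁ + N₂, (C X * X) ^ N₂ * Q₁ + (C X * X) ^ N₁ * Q₂, ?_⟩
    simp only [map_add, map_mul, map_pow, aevalAeval_X, aevalAeval_Y, ← h₁, ← h₂, monom_nsmul,
      monom_add]
    ring
  | single t a =>
    set α := t.1 * w.2 - t.2 * w.1
    set β := v.1 * t.2 - v.2 * t.1
    obtain ⟨i, hi⟩ : ∃ i : ℕ, (α.natAbs + β.natAbs + α : ℤ) = i :=
      Int.eq_ofNat_of_zero_le (by omega)
    obtain ⟨j, hj⟩ : ∃ j : ℕ, (α.natAbs + β.natAbs + β : ℤ) = j :=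
      Int.eq_ofNat_of_zero_le (by omega)
    have hexp : (α.natAbs + β.natAbs) • (v + w) + t = i • v + j • w := by
      rw [eq_smul_add_smul_of_det_eq_one hvw t, ← natCast_zsmul v, ← natCast_zsmul w,
        ← natCast_zsmul (v + w), ← hi, ← hj]
      push_cast
      module
    refine ⟨α.natAbs + β.natAbs, C (C a) * (C X ^ i * X ^ j), ?_⟩
    rw [single_eq_smul_monom, mul_smul_comm, ← monom_add, hexp, monom_add, monom_nsmul,
      monom_nsmul, Algebra.smul_def]
    simp only [map_mul, map_pow, aevalAeval_C, aeval_C, aeval_X, aevalAeval_Y]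

end UnimodularBasis

section BivariateEvaluation

open Polynomial

lemma map_aevalAeval {R A B : Type*} [CommSemiring R] [CommSemiring A]
    [Algebra R A] [CommSemiring B] [Algebra R B] (φ : A →ₐ[R] B) (x y : A) (Q : R[X][X]) :
    φ (aevalAeval x y Q) = aevalAeval (φ x) (φ y) Q := by
  suffices φ.comp (aevalAeval x y) = aevalAeval (φ x) (φ y) from DFunLike.congr_fun this Q
  exact (aevalAevalEquiv R B).symm.injective (by simp)

lemma aeval_coeff_eq_zero_of_transcendental {R S : Type*} [CommRing R] [NoZeroDivisors R]
    [CommRing S] [NoZeroDivisors S] [Algebra R S] {x y : S} (hx : IsAlgebraic R x)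
    (hy : Transcendental R y) {Q : R[X][X]} (hQ : aevalAeval x y Q = 0) (j : ℕ) :
    aeval x (Q.coeff j) = 0 := by
  let K := Algebra.adjoin R {x}
  have hyK : Transcendental K y := by
    have : Algebra.IsAlgebraic R K :=
      K.isAlgebraic_iff.1 (Algebra.isAlgebraic_adjoin_singleton_iff.2 hx)
    exact fun h => hy (h.restrictScalars R)
  let ev : R[X] →+* K := (aeval (⟨x, Algebra.self_mem_adjoin_singleton R x⟩ : K)).toRingHom
  have hev (q : R[X]) : (ev q : S) = aeval x q := by simp [ev]
  have haeval : aeval y (Q.map ev) = aevalAeval x y Q := by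
    clear hQ
    induction Q using Polynomial.induction_on' with
    | add => simp_all
    | monomial n q => simp [hev]
  have hmap : Q.map ev = 0 := transcendental_iff.1 hyK _ (haeval.trans hQ)
  rw [← hev, ← coeff_map, hmap]
  simp

end BivariateEvaluation

section PrimeIdeals

open Polynomial

variable {F : Type*} [Field F] {v w : ℤ × ℤ} {P : Ideal (LP F)} [P.IsPrime] {f : LP F}

/-- Over `F(X ^ v)` modulo `P`, the element `f` is a polynomial in the transcendental `X ^ w`, so
each of its coefficients vanishes. -/
lemma aeval_monom_minpoly_dvd (hvw : v.1 * w.2 - v.2 * w.1 = 1)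
    (hv : IsAlgebraic F (Ideal.Quotient.mk P (monom F v)))
    (hw : Transcendental F (Ideal.Quotient.mk P (monom F w))) (hf : f ∈ P) :
    aeval (monom F v) (minpoly F (Ideal.Quotient.mk P (monom F v))) ∣ f := by
  set x := Ideal.Quotient.mk P (monom F v)
  set y := Ideal.Quotient.mk P (monom F w)
  obtain ⟨N, Q, hQ⟩ := exists_monom_mul_eq_aevalAeval hvw f
  have hroot : aevalAeval x y Q = 0 := by
    refine (map_aevalAeval (Ideal.Quotient.mkₐ F P) (monom F v) (monom F w) Q).symm.trans ?_
    rw [← hQ]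
    exact Ideal.Quotient.eq_zero_iff_mem.2 (P.mul_mem_left _ hf)
  obtain ⟨Q', rfl⟩ := (C_dvd_iff_dvd_coeff _ _).2 fun j =>
    minpoly.dvd F x (aeval_coeff_eq_zero_of_transcendental hv hw hroot j)
  have hdvd : aeval (monom F v) (minpoly F x) ∣ monom F (N • (v + w)) * f := by
    rw [hQ, map_mul, aevalAeval_C]
    exact dvd_mul_right _ _
  exact (isUnit_monom _).dvd_mul_left.1 hdvd

theorem mem_finOrderExponents_of_isPrime [Finite F] (hf : f ∈ P) {u : ℤ × ℤ}
    (hline : ∀ g : LP F, g ∣ f → (∃ v : ℤ × ℤ, v ≠ 0 ∧ IsLinePoly v g) → IsLinePoly u g)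
    {t : ℤ × ℤ} (ht : t ≠ 0) (htP : monom F t - 1 ∈ P) : u ∈ finOrderExponents P := by
  obtain ⟨d, v, w, hd, rfl, hvw⟩ := exists_nsmul_eq_and_det_eq_one ht
  have hv0 : v ≠ 0 := by rintro rfl; simp at hvw
  have hunit (s : ℤ × ℤ) : IsUnit (Ideal.Quotient.mk P (monom F s)) :=
    (isUnit_monom s).map _
  have hv : v ∈ finOrderExponents P := mem_finOrderExponents_of_nsmul hd <|
    mem_finOrderExponents_iff_exists.2 ⟨1, one_pos, by rwa [pow_one]⟩
  have hintegral : IsIntegral F (Ideal.Quotient.mk P (monom F v)) := by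
    obtain ⟨k, hk, hpow⟩ := isOfFinOrder_iff_pow_eq_one.1 (mem_finOrderExponents.1 hv)
    exact .of_pow hk (hpow ▸ isIntegral_one)
  rw [eq_smul_add_smul_of_det_eq_one hvw u]
  by_cases hw : IsAlgebraic F (Ideal.Quotient.mk P (monom F w))
  · have hw' : w ∈ finOrderExponents P := isOfFinOrder_of_isIntegral (hunit w) hw.isIntegral
    exact add_mem (zsmul_mem hv _) (zsmul_mem hw' _)
  · have hdvd := aeval_monom_minpoly_dvd hvw hintegral.isAlgebraic hw hf
    have hlinev := isLinePoly_aeval_monom (R := F) hv0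
      (minpoly.coeff_zero_ne_zero hintegral (hunit v).ne_zero) (minpoly.natDegree_pos hintegral).ne'
    have hparallel := (hline _ hdvd ⟨v, hv0, hlinev⟩).det_eq_zero hlinev
    rw [hparallel, zero_smul, add_zero]
    exact zsmul_mem hv _

end PrimeIdeals

theorem generalized_nivat_one_direction_general {F : Type*} [Field F] [Finite F] (f : LP F)
    (hline : ∃ u : ℤ × ℤ, u ≠ 0 ∧ ∀ g : LP F, g ∣ f →
      (∃ v : ℤ × ℤ, v ≠ 0 ∧ IsLinePoly v g) → IsLinePoly u g)
    (c : ℤ × ℤ → F) (hc : Annihilates f c) (hlc : LowComplexity c) :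
    Periodic c := by
  obtain ⟨u, hu, hline⟩ := hline
  obtain ⟨h, hprod, hann⟩ := hlc.exists_mem_differenceProducts_mem_annihilator
  obtain ⟨p, _⟩ := CharP.exists F
  have : Fact p.Prime := ⟨CharP.char_is_prime F p⟩
  have hmem : u ∈ finOrderExponents (annihilator c) := by
    refine mem_finOrderExponents_of_forall_isPrime p fun P hP hle => ?_
    obtain ⟨t, ht, htP⟩ := exists_monom_sub_one_mem_of_isPrime hprod (hle hann)
    exact mem_finOrderExponents_of_isPrime (hle (annihilates_iff_mem_annihilator.1 hc)) hline
      ht htP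
  obtain ⟨k, hk, hperiod⟩ := mem_finOrderExponents_iff_exists.1 hmem
  rw [← monom_nsmul, monom_sub_one_mem_annihilator] at hperiod
  exact ⟨k • u, smul_ne_zero hk.ne' hu, hperiod⟩

/-- an algebraic subshift whose defining polynomial has all line polynomial
factors in the same direction has the generalized Nivat property. -/
theorem generalized_nivat_one_direction (p : ℕ) [Fact p.Prime] (f : LP (ZMod p))
    (hf : f ≠ 0)
    (hline : ∃ u : ℤ × ℤ, u ≠ 0 ∧ ∀ g : LP (ZMod p), g ∣ f →
      (∃ v : ℤ × ℤ, v ≠ 0 ∧ IsLinePoly v g) → IsLinePoly u g)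
    (c : ℤ × ℤ → ZMod p) (hc : Annihilates f c) (hlc : LowComplexity c) :
    Periodic c :=
  generalized_nivat_one_direction_general f hline c hc hlc
end

section
/- Let p be a prime and let g be a Laurent polynomial over F_p in the single variable X whose support has at least two elements. Then the two-variable Laurent polynomial Y − g(X) over F_p has no line polynomial factors. -/
/-!
Grade the Laurent polynomials by the lines in direction `u`. A line polynomial `h` is homogeneous,
so multiplication by `h` acts on each homogeneous component separately; as `ℤ²` has two unique
sums, a nonzero multiple of a polynomial with at least two terms again has at least two terms.
Hence no line in direction `u` meets the support of a multiple of `h` in exactly one point. The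
support of `Y - g(X)`, however, consists of at least two points of a horizontal line and one point
off it, and such a set is met in exactly one point by some line in every direction.
-/

section Support

open AddMonoidAlgebra DirectSum

variable {R M : Type*}

theorem support_single_one_sub [Ring R] [Nontrivial R] [DecidableEq M]
    {f : AddMonoidAlgebra R M} {m : M} (hm : m ∉ f.coeff.support) :
    (single m 1 - f).coeff.support = insert m f.coeff.support := by
  have hm_neg : m ∉ (-f.coeff).support := by rwa [Finsupp.support_neg]
  rw [sub_eq_add_neg, coeff_add, coeff_single, coeff_neg,
    Finsupp.support_single_add hm_neg one_ne_zero, Finset.cons_eq_insert, Finsupp.support_neg]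

theorem one_lt_card_support_mul [Semiring R] [NoZeroDivisors R] [Add M] [TwoUniqueSums M]
    {f g : AddMonoidAlgebra R M} (hf : 1 < f.coeff.support.card) (hg : g ≠ 0) :
    1 < (f * g).coeff.support.card := by
  have hg_pos : 0 < g.coeff.support.card :=
    Finset.card_pos.2 (Finsupp.support_nonempty_iff.2 (coeff_eq_zero.not.2 hg))
  have mem_of_uniqueAdd {x : M × M} (hx : x ∈ f.coeff.support ×ˢ g.coeff.support)
      (hux : UniqueAdd f.coeff.support g.coeff.support x.1 x.2) :
      x.1 + x.2 ∈ (f * g).coeff.support := by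
    rw [Finset.mem_product, Finsupp.mem_support_iff, Finsupp.mem_support_iff] at hx
    rw [Finsupp.mem_support_iff, coeff_mul_add_of_uniqueAdd hux]
    exact mul_ne_zero hx.1 hx.2
  obtain ⟨x, hx, y, hy, hxy, hux, huy⟩ :=
    TwoUniqueSums.uniqueAdd_of_one_lt_card (one_lt_mul_of_lt_of_le hf hg_pos)
  refine Finset.one_lt_card.2
    ⟨_, mem_of_uniqueAdd hx hux, _, mem_of_uniqueAdd hy huy, fun hsum ↦ hxy ?_⟩
  obtain ⟨hx₁, hx₂⟩ := Finset.mem_product.1 hx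
  exact Prod.ext_iff.2 (huy hx₁ hx₂ hsum)

variable {ι : Type*} [CommSemiring R] [AddMonoid M]

theorem coeff_decompose_gradeBy [DecidableEq ι] [AddMonoid ι] (φ : M →+ ι)
    (f : AddMonoidAlgebra R M) (i : ι) :
    (decompose (gradeBy R φ) f i : AddMonoidAlgebra R M).coeff = f.coeff.filter (φ · = i) := by
  induction f using AddMonoidAlgebra.induction_linear with
  | zero => simp [Finsupp.filter_zero]
  | add f g hf hg => simp [decompose_add, hf, hg, Finsupp.filter_add]
  | single m r =>
    rw [GradesBy.decompose_single]
    by_cases hm : φ m = i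
    · subst hm
      simp
    · simp [of_eq_of_ne, hm, Ne.symm hm]

theorem exists_ne_mem_support_mul_of_mem_gradeBy [NoZeroDivisors R] [TwoUniqueSums M]
    [AddLeftCancelMonoid ι] {φ : M →+ ι} {i : ι} {f g : AddMonoidAlgebra R M}
    (hf : f ∈ gradeBy R φ i) (hcard : 1 < f.coeff.support.card) {m : M}
    (hm : m ∈ (f * g).coeff.support) :
    ∃ m' ∈ (f * g).coeff.support, φ m' = φ m ∧ m' ≠ m := by
  classical
  obtain ⟨a, ha, b, hb, rfl⟩ := Finset.mem_add.1 (support_coeff_mul_subset f g hm)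
  have hdegree : φ (a + b) = i + φ b := by rw [map_add, hf a ha]
  have hcomponent : (decompose (gradeBy R φ) g (φ b) : AddMonoidAlgebra R M) ≠ 0 := fun h ↦ by
    have hcoeff := coeff_decompose_gradeBy φ g (φ b)
    rw [h] at hcoeff
    exact Finsupp.mem_support_iff.1 hb (by simpa using (DFunLike.congr_fun hcoeff b).symm)
  have hfiber := one_lt_card_support_mul hcard hcomponent
  rw [← coe_decompose_mul_add_of_left_mem (gradeBy R φ) hf, coeff_decompose_gradeBy,
    ← hdegree] at hfiber
  obtain ⟨m', hm', hne⟩ := Finset.exists_mem_ne hfiber (a + b)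
  rw [Finsupp.support_filter, Finset.mem_filter] at hm'
  exact ⟨m', hm'.1, hm'.2, hne⟩

end Support

/-- The linear form on `ℤ²` sending `m` to `det (m, u)`: for `u ≠ 0` its level sets are the lines in
direction `u`, so that grading by it groups the terms of a Laurent polynomial along these lines. -/
def lineForm (u : ℤ × ℤ) : ℤ × ℤ →+ ℤ :=
  AddMonoidHom.mk' (fun m ↦ m.1 * u.2 - m.2 * u.1) fun a b ↦ by
    simp only [Prod.fst_add, Prod.snd_add]
    ring

theorem lineForm_apply (u m : ℤ × ℤ) : lineForm u m = m.1 * u.2 - m.2 * u.1 := rfl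

theorem lineForm_injOn_horizontal {u : ℤ × ℤ} (hu : u.2 ≠ 0) (k : ℤ) :
    Set.InjOn (lineForm u) {m | m.2 = k} := by
  rintro a rfl b hb hab
  rw [Set.mem_ofPred_eq] at hb
  rw [lineForm_apply, lineForm_apply, hb, sub_left_inj] at hab
  exact Prod.ext (mul_right_cancel₀ hu hab) hb.symm

theorem exists_mem_insert_forall_lineForm_eq_imp_eq {u : ℤ × ℤ} (hu : u ≠ 0)
    {S : Finset (ℤ × ℤ)} {k : ℤ} (hS : ∀ m ∈ S, m.2 = k) (hcard : 1 < S.card)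
    {x : ℤ × ℤ} (hx : x.2 ≠ k) :
    ∃ m ∈ insert x S, ∀ m' ∈ insert x S, lineForm u m' = lineForm u m → m' = m := by
  by_cases hu₂ : u.2 = 0
  · have hu₁ : u.1 ≠ 0 := fun hu₁ ↦ hu (Prod.ext hu₁ hu₂)
    refine ⟨x, Finset.mem_insert_self x S, fun m hm hxm ↦ ?_⟩
    obtain rfl | hm := Finset.mem_insert.1 hm
    · rfl
    · simp only [lineForm_apply, hu₂, hS m hm, mul_zero, zero_sub, neg_inj] at hxm
      exact absurd (mul_right_cancel₀ hu₁ hxm).symm hx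
  · have hinj : Set.InjOn (lineForm u) S := (lineForm_injOn_horizontal hu₂ k).mono hS
    obtain ⟨m, hm, hmx⟩ : ∃ m ∈ S, lineForm u m ≠ lineForm u x := by
      obtain ⟨a, ha, b, hb, hab⟩ := Finset.one_lt_card.1 hcard
      by_contra! h
      exact hab (hinj ha hb ((h a ha).trans (h b hb).symm))
    refine ⟨m, Finset.mem_insert_of_mem hm, fun m' hm' hmm' ↦ ?_⟩
    obtain rfl | hm' := Finset.mem_insert.1 hm'
    · exact absurd hmm'.symm hmx
    · exact hinj hm' hm hmm'

section LinePoly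

open AddMonoidAlgebra

variable {R : Type*} [CommRing R] {u : ℤ × ℤ} {h : LP R}

theorem IsLinePoly.direction_ne_zero (hline : IsLinePoly u h) : u ≠ 0 := by
  rintro rfl
  obtain ⟨hcard, n, hn⟩ := hline
  have eq_base (m) (hm : m ∈ h.coeff.support) : m = n := by
    obtain ⟨r, h₁, h₂⟩ := hn m hm
    exact Prod.ext (by simpa using h₁) (by simpa using h₂)
  obtain ⟨a, ha, b, hb, hab⟩ := Finset.one_lt_card.1 hcard
  exact hab ((eq_base a ha).trans (eq_base b hb).symm)

theorem IsLinePoly.exists_mem_gradeBy (hline : IsLinePoly u h) :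
    ∃ i, h ∈ gradeBy R (lineForm u) i := by
  obtain ⟨-, n, hn⟩ := hline
  refine ⟨lineForm u n, fun m hm ↦ ?_⟩
  obtain ⟨r, h₁, h₂⟩ := hn m hm
  have : (m.1 * u.2 - m.2 * u.1 : ℚ) = n.1 * u.2 - n.2 * u.1 := by
    rw [h₁, h₂]
    ring
  exact_mod_cast this

theorem additive_ca_no_line_factors_general [NoZeroDivisors R] {g : LP R}
    (hsupp : ∀ m ∈ g.coeff.support, m.2 = 0) (hcard : 2 ≤ g.coeff.support.card)
    (hline : IsLinePoly u h) :
    ¬ h ∣ (single ((0 : ℤ), (1 : ℤ)) 1 - g) := by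
  rintro ⟨q, hq⟩
  have : Nontrivial R := by
    obtain ⟨m, hm⟩ := Finset.card_pos.1 (zero_lt_two.trans_le hcard)
    exact nontrivial_of_ne _ _ (Finsupp.mem_support_iff.1 hm)
  have hsupport : (h * q).coeff.support = insert (0, 1) g.coeff.support := by
    rw [← hq, support_single_one_sub fun hmem ↦ one_ne_zero (hsupp _ hmem)]
  obtain ⟨i, hi⟩ := hline.exists_mem_gradeBy
  obtain ⟨m, hm, hisolated⟩ :=
    exists_mem_insert_forall_lineForm_eq_imp_eq hline.direction_ne_zero hsupp hcard
      (x := (0, 1)) one_ne_zero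
  rw [← hsupport] at hm hisolated
  obtain ⟨m', hm', hform, hne⟩ := exists_ne_mem_support_mul_of_mem_gradeBy hi hline.1 hm
  exact hne (hisolated m' hm' hform)

end LinePoly

/-- if g(X) has at least two terms, Y − g(X) has no line polynomial factors. -/
theorem additive_ca_no_line_factors (p : ℕ) [Fact p.Prime] (g : LP (ZMod p))
    (hsupp : ∀ m ∈ g.coeff.support, m.2 = 0) (hcard : 2 ≤ g.coeff.support.card) :
    ¬ ∃ (h : LP (ZMod p)) (u : ℤ × ℤ), u ≠ 0 ∧ IsLinePoly u h ∧
      h ∣ (AddMonoidAlgebra.single ((0:ℤ),(1:ℤ)) 1 - g) := by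
  rintro ⟨_, _, -, hline, hdvd⟩
  exact additive_ca_no_line_factors_general hsupp hcard hline hdvd
end

section
/- Every low complexity configuration in the 4-dot system is periodic: if c : ℤ² → F₂ satisfies c(i,j) + c(i+1,j) + c(i,j+1) + c(i+1,j+1) = 0 for all (i,j) ∈ ℤ², and there is a finite nonempty D ⊆ ℤ² such that the number of distinct D-patterns of c is at most |D|, then c is periodic. -/
/-!
The four-dot relation, in the form `c (i, j) + c (i + 1, j + 1) = c (i + 1, j) + c (i, j + 1)`,
forces `c (i, j) = a i + b j`. A period of `a` or of `b` gives one of `c`, so suppose that neither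
is periodic. The characters `χ` with `χ ∘ a` periodic then form a proper subgroup of the character
group, likewise for `b`, and a group is not the union of two proper subgroups; so some `χ` makes
both `u = χ ∘ a` and `v = χ ∘ b` non-periodic.

A nontrivial affine relation between translates of a finitely valued sequence is a recurrence which
is deterministic in both directions, so by the pigeonhole principle the sequence is periodic. Hence
`1` and the translates of `u` are linearly independent, likewise for `v`, and, taking products, so
are `1` and the translates of `χ (c (i, j)) = u i * v j`. Those of them that correspond to a shape
`D` are `|D| + 1` independent functions which factor through the set of `D`-patterns, so there are
more than `|D|` patterns.
-/

/-- The sequence `u` has a nonzero period, of either sign. -/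
def IsPeriodicSeq {α : Type*} (u : ℤ → α) : Prop :=
  ∃ p ≠ 0, Function.Periodic u p

section Recurrence

variable {R : Type*} [NonUnitalNonAssocSemiring R] [NoZeroDivisors R]

theorem apply_add_eq_zero_of_sum_mul_eq_zero {w : ℤ →₀ R} {d : ℤ → R} {s j : ℤ}
    (hsum : (w.sum fun i r ↦ r * d (s + i)) = 0) (hj : w j ≠ 0)
    (hd : ∀ i ∈ w.support, i ≠ j → d (s + i) = 0) : d (s + j) = 0 := by
  have hsingle : (w.sum fun i r ↦ r * d (s + i)) = w j * d (s + j) :=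
    Finset.sum_eq_single j (fun i hi hij ↦ by simp only [hd i hi hij, mul_zero])
      fun hj' ↦ absurd (Finsupp.mem_support_iff.2 hj) hj'
  exact (mul_eq_zero.1 (hsingle.symm.trans hsum)).resolve_left hj

theorem eq_zero_of_recurrence_of_eqOn_Ico {w : ℤ →₀ R} {d : ℤ → R}
    (hrec : ∀ s, (w.sum fun i r ↦ r * d (s + i)) = 0) {l m : ℤ} (hl : w l ≠ 0) (hm : w m ≠ 0)
    (hw : w.support ⊆ Finset.Icc l m) (hd : Set.EqOn d 0 (Set.Ico l m)) :
    d = 0 := by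
  have bounds : ∀ i ∈ w.support, l ≤ i ∧ i ≤ m := fun i hi ↦ Finset.mem_Icc.1 (hw hi)
  have right : ∀ s, (∀ k, l ≤ k → k < m → d (s + k) = 0) → d (s + m) = 0 := fun s hs ↦
    apply_add_eq_zero_of_sum_mul_eq_zero (hrec s) hm fun i hi him ↦
      hs i (bounds i hi).1 ((bounds i hi).2.lt_of_ne him)
  have left : ∀ s, (∀ k, l < k → k ≤ m → d (s + k) = 0) → d (s + l) = 0 := fun s hs ↦
    apply_add_eq_zero_of_sum_mul_eq_zero (hrec s) hl fun i hi hil ↦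
      hs i ((bounds i hi).1.lt_of_ne' hil) (bounds i hi).2
  have window : ∀ s k, l ≤ k → k < m → d (s + k) = 0 := by
    intro s
    induction s using Int.induction_on with
    | zero =>
      intro k hlk hkm
      rw [zero_add]
      exact hd ⟨hlk, hkm⟩
    | succ s ih =>
      intro k hlk hkm
      rw [show (s : ℤ) + 1 + k = s + (k + 1) by ring]
      rcases (Int.add_one_le_of_lt hkm).lt_or_eq with hlt | heq
      · exact ih (k + 1) (by lia) hlt
      · exact heq ▸ right s ih
    | pred s ih =>
      intro k hlk hkm
      have shift : ∀ k, l < k → k ≤ m → d (-s - 1 + k) = 0 := fun k hlk hkm ↦ by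
        rw [show -(s : ℤ) - 1 + k = -s + (k - 1) by ring]
        exact ih (k - 1) (by lia) (by lia)
      rcases hlk.lt_or_eq with hlt | rfl
      · exact shift k hlt hkm.le
      · exact left _ shift
  funext n
  simpa using right (n - m) (window (n - m))

theorem exists_translate_eqOn {α : Type*} {u : ℤ → α} (hu : (Set.range u).Finite)
    {S : Set ℤ} (hS : S.Finite) : ∃ p ≠ 0, ∃ s, ∀ k ∈ S, u (s + k + p) = u (s + k) := by
  have := hu.to_subtype
  have := hS.to_subtype
  let restriction (s : ℤ) (k : S) : Set.range u := ⟨u (s + k), Set.mem_range_self _⟩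
  obtain ⟨s, t, hst, heq⟩ := Finite.exists_ne_map_eq_of_infinite restriction
  refine ⟨t - s, sub_ne_zero.2 hst.symm, s, fun k hk ↦ ?_⟩
  rw [show s + k + (t - s) = t + k by ring]
  exact congrArg Subtype.val (congrFun heq ⟨k, hk⟩).symm

theorem isPeriodicSeq_of_sum_mul_eq_const {R : Type*} [NonUnitalNonAssocRing R] [NoZeroDivisors R]
    {u : ℤ → R} (hu : (Set.range u).Finite) {w : ℤ →₀ R} (hw : w ≠ 0) {K : R}
    (hK : ∀ s, (w.sum fun i r ↦ r * u (s + i)) = K) : IsPeriodicSeq u := by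
  have hne : w.support.Nonempty := Finsupp.support_nonempty_iff.2 hw
  set l := w.support.min' hne
  set m := w.support.max' hne
  obtain ⟨p, hp, s, hs⟩ := exists_translate_eqOn hu (Set.finite_Ico l m)
  let d (n : ℤ) : R := u (s + n + p) - u (s + n)
  have hd : d = 0 := by
    refine eq_zero_of_recurrence_of_eqOn_Ico (w := w) (fun t ↦ ?_)
      (Finsupp.mem_support_iff.1 (w.support.min'_mem hne))
      (Finsupp.mem_support_iff.1 (w.support.max'_mem hne))
      (fun i hi ↦ Finset.mem_Icc.2 ⟨w.support.min'_le i hi, w.support.le_max' i hi⟩)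
      fun k hk ↦ sub_eq_zero.2 (hs k hk)
    calc (w.sum fun i r ↦ r * d (t + i))
        = (w.sum fun i r ↦ r * u (s + t + p + i)) - w.sum fun i r ↦ r * u (s + t + i) := by
          simp only [d, mul_sub, Finsupp.sum_sub, add_right_comm, ← add_assoc]
      _ = 0 := by rw [hK, hK, sub_self]
  refine ⟨p, hp, fun n ↦ ?_⟩
  simpa [d] using sub_eq_zero.1 (congrFun hd (n - s))

end Recurrence

section LinearIndependence

/-- The constant function `1`, indexed by `none`, together with the translates of `u`. Linear
independence of this family says that the translates of `u` satisfy no affine relation. -/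
def oneAndTranslates {G R : Type*} [Add G] [One R] (u : G → R) : Option G → G → R
  | none => 1
  | some g => fun x ↦ u (x + g)

variable {R : Type*} [Ring R]

theorem linearIndependent_oneAndTranslates [NoZeroDivisors R] {u : ℤ → R}
    (hu : (Set.range u).Finite) (hper : ¬IsPeriodicSeq u) :
    LinearIndependent R (oneAndTranslates u) := by
  rw [linearIndependent_iff]
  intro x hx
  have hrel : ∀ s, x none + (x.some.sum fun i r ↦ r * u (s + i)) = 0 := fun s ↦ by
    have := congrFun hx s
    rw [Finsupp.linearCombination_option] at this
    simpa [Finsupp.linearCombination_apply, Finsupp.sum, oneAndTranslates] using this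
  have hsome : x.some = 0 := by
    by_contra hne
    exact hper <| isPeriodicSeq_of_sum_mul_eq_const hu hne fun s ↦
      eq_neg_of_add_eq_zero_right (hrel s)
  ext (_ | i)
  · simpa [hsome] using hrel 0
  · exact DFunLike.congr_fun hsome i

theorem linearIndependent_mul_prod {ι κ X Y : Type*} {f : ι → X → R} {g : κ → Y → R}
    (hf : LinearIndependent R f) (hg : LinearIndependent R g) :
    LinearIndependent R fun (p : ι × κ) (x : X × Y) ↦ f p.1 x.1 * g p.2 x.2 := by
  classical
  rw [linearIndependent_iff'']
  intro s w hw hsum p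
  have hsub : s ⊆ s.image Prod.fst ×ˢ s.image Prod.snd := Finset.subset_product
  have hxy : ∀ x y,
      ∑ j ∈ s.image Prod.snd, (∑ i ∈ s.image Prod.fst, w (i, j) * f i x) * g j y = 0 := by
    intro x y
    have := congrFun hsum (x, y)
    rw [Finset.sum_subset hsub fun q _ hq ↦ by rw [hw q hq, zero_smul],
      Finset.sum_product_right] at this
    simpa [Finset.sum_mul, mul_assoc] using this
  have hx : ∀ j ∈ s.image Prod.snd, ∀ x, ∑ i ∈ s.image Prod.fst, w (i, j) * f i x = 0 :=
    fun j hj x ↦ linearIndependent_iff'.1 hg _ _ (funext fun y ↦ by simpa using hxy x y) j hj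
  by_cases hp : p ∈ s
  · exact linearIndependent_iff'.1 hf _ (fun i ↦ w (i, p.2))
      (funext fun x ↦ by simpa using hx p.2 (Finset.mem_image_of_mem _ hp) x) p.1
      (Finset.mem_image_of_mem _ hp)
  · exact hw p hp

theorem linearIndependent_oneAndTranslates_mul {G H : Type*} [Add G] [Add H]
    {u : G → R} {v : H → R} (hu : LinearIndependent R (oneAndTranslates u))
    (hv : LinearIndependent R (oneAndTranslates v)) :
    LinearIndependent R (oneAndTranslates fun x : G × H ↦ u x.1 * v x.2) := by
  let index (o : Option (G × H)) : Option G × Option H := (o.map Prod.fst, o.map Prod.snd)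
  have hindex : Function.Injective index := by
    rintro (_ | ⟨_, _⟩) (_ | ⟨_, _⟩) <;> simp [index]
  convert (linearIndependent_mul_prod hu hv).comp index hindex using 1
  funext o x
  cases o <;> simp [index, oneAndTranslates]

theorem card_lt_ncard_patterns [StrongRankCondition R] {A : Type*} {c : ℤ × ℤ → A} {φ : A → R}
    (hli : LinearIndependent R (oneAndTranslates (φ ∘ c))) {D : Finset (ℤ × ℤ)}
    (hfin : (Patterns c D).Finite) : D.card < (Patterns c D).ncard := by
  have := hfin.fintype
  let onPatterns : Option D → Patterns c D → R
    | none => 1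
    | some d => fun P ↦ φ (P.1 d)
  let pullback : (Patterns c D → R) →ₗ[R] (ℤ × ℤ → R) :=
    LinearMap.funLeft R R fun t ↦ ⟨fun d ↦ c (t + d.1), Set.mem_range_self t⟩
  have hpull : pullback ∘ onPatterns = oneAndTranslates (φ ∘ c) ∘ Option.map Subtype.val := by
    funext o
    cases o <;> rfl
  have hpatterns : LinearIndependent R onPatterns := by
    apply LinearIndependent.of_comp pullback
    rw [hpull]
    exact hli.comp _ (Option.map_injective Subtype.val_injective)
  have hcard := hpatterns.fintype_card_le_finrank
  rwa [Fintype.card_option, Fintype.card_coe, Module.finrank_fintype_fun_eq_card,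
    ← Nat.card_eq_fintype_card, Nat.add_one_le_iff] at hcard

end LinearIndependence

section Characters

theorem exists_notMem_and_notMem_of_ne_top {G : Type*} [Group G] {H K : Subgroup G} (hH : H ≠ ⊤)
    (hK : K ≠ ⊤) : ∃ x, x ∉ H ∧ x ∉ K := by
  obtain ⟨x, hx⟩ := SetLike.exists_not_mem_of_ne_top H hH rfl
  obtain ⟨y, hy⟩ := SetLike.exists_not_mem_of_ne_top K hK rfl
  by_cases hxK : x ∈ K
  · by_cases hyH : y ∈ H
    · exact ⟨x * y, by rwa [H.mul_mem_cancel_right hyH], by rwa [K.mul_mem_cancel_left hxK]⟩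
    · exact ⟨y, hyH, hy⟩
  · exact ⟨x, hx, hxK⟩

variable {A : Type*} [AddCommGroup A]

/-- The group of characters `χ` of `A` for which the sequence `χ ∘ a` is periodic. -/
def periodicCharacters (M : Type*) [DivisionCommMonoid M] (a : ℤ → A) : Subgroup (AddChar A M) where
  carrier := {χ | IsPeriodicSeq (χ ∘ a)}
  one_mem' := ⟨1, one_ne_zero, fun _ ↦ rfl⟩
  mul_mem' := by
    rintro χ ψ ⟨p, hp, hχ⟩ ⟨q, hq, hψ⟩
    exact ⟨p * q, mul_ne_zero hp hq, (mul_comm q p ▸ hχ.int_mul q).mul (hψ.int_mul p)⟩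
  inv_mem' := by
    rintro χ ⟨p, hp, hχ⟩
    refine ⟨p, hp, fun n ↦ ?_⟩
    simpa only [Function.comp_apply, AddChar.inv_apply'] using congrArg (·⁻¹) (hχ n)

theorem periodicCharacters_ne_top [Finite A] {a : ℤ → A} (ha : ¬IsPeriodicSeq a) :
    periodicCharacters ℂ a ≠ ⊤ := by
  intro htop
  have hper : ∀ χ : AddChar A ℂ, IsPeriodicSeq (χ ∘ a) := fun χ ↦
    htop.ge (Subgroup.mem_top χ)
  choose p hp hperp using hper
  have := Fintype.ofFinite (AddChar A ℂ)
  refine ha ⟨∏ χ, p χ, Finset.prod_ne_zero_iff.2 fun χ _ ↦ hp χ, fun n ↦ ?_⟩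
  rw [← sub_eq_zero, ← AddChar.forall_apply_eq_zero]
  intro χ
  obtain ⟨k, hk⟩ := Finset.dvd_prod_of_mem p (Finset.mem_univ χ)
  have hχ : χ (a (n + ∏ χ, p χ)) = χ (a n) := by
    rw [hk, mul_comm]
    exact (hperp χ).int_mul k n
  rw [AddChar.map_sub_eq_div, hχ, div_self (χ.val_isUnit _).ne_zero]

end Characters

theorem eq_row_add_column_sub {A : Type*} [AddCommGroup A] {c : ℤ × ℤ → A}
    (hc : ∀ i j : ℤ, c (i, j) + c (i + 1, j + 1) = c (i + 1, j) + c (i, j + 1)) (i j : ℤ) :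
    c (i, j) = c (i, 0) + (c (0, j) - c (0, 0)) := by
  have hcol : ∀ i j, c (i + 1, j) - c (i, j) = c (i + 1, 0) - c (i, 0) := fun i j ↦ by
    have hper : Function.Periodic (fun j ↦ c (i + 1, j) - c (i, j)) 1 := fun j ↦
      sub_eq_sub_iff_add_eq_add.2 (by rw [add_comm, hc, add_comm])
    simpa using hper.int_mul_eq j
  have hper : Function.Periodic (fun i ↦ c (i, j) - c (i, 0)) 1 := fun i ↦
    sub_eq_sub_iff_sub_eq_sub.1 (hcol i j)
  have hrow : c (i, j) - c (i, 0) = c (0, j) - c (0, 0) := by simpa using hper.int_mul_eq i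
  rw [← hrow, add_sub_cancel]

theorem periodic_of_isPeriodicSeq_left {α β γ : Type*} {c : ℤ × ℤ → γ} {op : α → β → γ}
    {a : ℤ → α} {b : ℤ → β} (hc : ∀ i j, c (i, j) = op (a i) (b j)) (ha : IsPeriodicSeq a) :
    Periodic c := by
  obtain ⟨p, hp, ha⟩ := ha
  refine ⟨(p, 0), by simpa using hp, fun ⟨i, j⟩ ↦ ?_⟩
  rw [Prod.mk_add_mk, add_zero, hc, hc, ha]

theorem periodic_of_isPeriodicSeq_right {α β γ : Type*} {c : ℤ × ℤ → γ} {op : α → β → γ}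
    {a : ℤ → α} {b : ℤ → β} (hc : ∀ i j, c (i, j) = op (a i) (b j)) (hb : IsPeriodicSeq b) :
    Periodic c := by
  obtain ⟨p, hp, hb⟩ := hb
  refine ⟨(0, p), by simpa using hp, fun ⟨i, j⟩ ↦ ?_⟩
  rw [Prod.mk_add_mk, add_zero, hc, hc, hb]

theorem four_dot_nivat_general {A : Type*} [AddCommGroup A] [Finite A] (c : ℤ × ℤ → A)
    (hc : ∀ i j : ℤ, c (i, j) + c (i + 1, j + 1) = c (i + 1, j) + c (i, j + 1))
    (hlc : LowComplexity c) : Periodic c := by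
  let a (i : ℤ) : A := c (i, 0)
  let b (j : ℤ) : A := c (0, j) - c (0, 0)
  have hab : ∀ i j, c (i, j) = a i + b j := eq_row_add_column_sub hc
  by_contra hper
  have ha : ¬IsPeriodicSeq a := fun ha ↦ hper (periodic_of_isPeriodicSeq_left hab ha)
  have hb : ¬IsPeriodicSeq b := fun hb ↦ hper (periodic_of_isPeriodicSeq_right hab hb)
  obtain ⟨χ, hχa, hχb⟩ := exists_notMem_and_notMem_of_ne_top (periodicCharacters_ne_top ha)
    (periodicCharacters_ne_top hb)
  have hrange (u : ℤ → A) : (Set.range (χ ∘ u)).Finite :=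
    (Set.finite_range χ).subset (Set.range_comp_subset_range u χ)
  have hχc : χ ∘ c = fun x ↦ (χ ∘ a) x.1 * (χ ∘ b) x.2 :=
    funext fun ⟨i, j⟩ ↦ (congrArg χ (hab i j)).trans (χ.map_add_eq_mul _ _)
  have hli : LinearIndependent ℂ (oneAndTranslates (χ ∘ c)) := hχc ▸
    linearIndependent_oneAndTranslates_mul (linearIndependent_oneAndTranslates (hrange a) hχa)
      (linearIndependent_oneAndTranslates (hrange b) hχb)
  obtain ⟨D, -, hD⟩ := hlc
  exact (card_lt_ncard_patterns hli (Set.toFinite _)).not_ge hD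

/-- every low complexity configuration in the 4-dot system is periodic. -/
theorem four_dot_nivat (c : ℤ × ℤ → ZMod 2)
    (hc : ∀ i j : ℤ, c (i, j) + c (i + 1, j) + c (i, j + 1) + c (i + 1, j + 1) = 0)
    (hlc : LowComplexity c) : Periodic c := by
  refine four_dot_nivat_general c (fun i j ↦ ?_) hlc
  rw [← CharTwo.add_eq_zero, ← hc i j]
  ring
end

section
/- Let c : ℤ² → F₂ satisfy c(i,j) + c(i+1,j) + c(i,j+1) + c(i+1,j+1) = 0 for all (i,j) ∈ ℤ², and let c' : ℤ² → ℤ be the configuration obtained by renaming 0_{F₂} ↦ 0 and 1_{F₂} ↦ 1. If some nonzero Laurent polynomial over ℤ annihilates c', then c is periodic. -/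
/-!
The four-dot relation says that `c` has zero mixed difference, so `c (i, j) = a i + b j`. The sign
character `x ↦ (-1) ^ x = 1 - 2x` turns this sum into a product `u i * v j` and turns an annihilator
of `c'` into a Laurent polynomial whose product with `u i * v j` is constant. Fixing `j` leaves a
linear recurrence for `u`. If it is nontrivial for some `j`, then `u` is periodic, because `u` takes
finitely many values and a recurrent sequence is determined by a bounded window. Otherwise every row
of the annihilator annihilates `v`, and a nonzero row makes `v` periodic by the same argument.
-/

section FormalProduct

/-- The product of the Laurent polynomial with coefficient function `f` and the formal power series
of the configuration `c`, over an arbitrary group `G` of exponents. It serves both for `G = ℤ × ℤ`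
and for the rows, where `G = ℤ`. -/
def formalProduct {G R : Type*} [AddGroup G] [Semiring R] (f : G →₀ R) (c : G → R) (n : G) : R :=
  f.sum fun m a ↦ a * c (n - m)

variable {G R : Type*} [AddGroup G]

@[simp]
lemma formalProduct_zero_left [Semiring R] (c : G → R) (n : G) : formalProduct 0 c n = 0 :=
  Finsupp.sum_zero_index

lemma formalProduct_sub [Ring R] (f : G →₀ R) (c d : G → R) (n : G) :
    formalProduct f (fun k ↦ c k - d k) n = formalProduct f c n - formalProduct f d n := by
  simp only [formalProduct, mul_sub, Finsupp.sum_sub]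

lemma formalProduct_translate {G : Type*} [AddCommGroup G] [Semiring R] (f : G →₀ R) (c : G → R)
    (t n : G) : formalProduct f (fun k ↦ c (k + t)) n = formalProduct f c (n + t) := by
  simp only [formalProduct, sub_add_eq_add_sub]

lemma formalProduct_mul [CommSemiring R] {H : Type*} [AddGroup H] (f : G × H →₀ R) (u : G → R)
    (v : H → R) (x : G) (y : H) :
    formalProduct f (fun n ↦ u n.1 * v n.2) (x, y) =
      formalProduct (f.curry.mapRange (fun r ↦ formalProduct r v y) (formalProduct_zero_left v y))
        u x := by
  simp only [formalProduct]
  rw [Finsupp.sum_mapRange_index fun _ ↦ zero_mul _]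
  simp only [Finsupp.sum_mul]
  rw [Finsupp.sum_curry_index f fun m₁ m₂ a ↦ a * v (y - m₂) * u (x - m₁)]
  exact Finsupp.sum_congr fun m _ ↦ by simp only [Prod.fst_sub, Prod.snd_sub]; ring

lemma apply_eq_zero_of_formalProduct_eq_zero [Semiring R] [NoZeroDivisors R] {f : G →₀ R}
    {c : G → R} {n m₀ : G} (hm₀ : f m₀ ≠ 0) (hf : formalProduct f c (n + m₀) = 0)
    (hc : ∀ m ∈ f.support, m ≠ m₀ → c (n + m₀ - m) = 0) : c n = 0 := by
  rw [formalProduct, Finsupp.sum, Finset.sum_eq_single_of_mem m₀ (Finsupp.mem_support_iff.2 hm₀)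
    fun m hm hne ↦ by rw [hc m hm hne, mul_zero], add_sub_cancel_right] at hf
  exact (mul_eq_zero.1 hf).resolve_left hm₀

lemma annihilates_iff_formalProduct_eq_zero [CommRing R] {f : LP R} {c : ℤ × ℤ → R} :
    Annihilates f c ↔ ∀ n, formalProduct f.coeff c n = 0 :=
  Iff.rfl

end FormalProduct

section Recurrence

variable {R : Type*}

lemma eq_zero_of_recurrence_of_eq_zero_on_window [Semiring R] [NoZeroDivisors R] {h : ℤ →₀ R}
    {g : ℤ → R} {l r s : ℤ} (hl : h l ≠ 0) (hr : h r ≠ 0) (hlr : ∀ m ∈ h.support, m ∈ Set.Icc l r)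
    (hg : ∀ n, formalProduct h g n = 0) (hs : ∀ n ∈ Set.Ico s (s + (r - l)), g n = 0) (n : ℤ) :
    g n = 0 := by
  have window (k : ℕ) : ∀ n ∈ Set.Ico (s - k) (s + (r - l) + k), g n = 0 := by
    induction k with
    | zero => simpa using hs
    | succ k ih =>
      intro n hn
      simp only [Set.mem_Ico, Set.mem_Icc] at hlr hn ih
      obtain hlt | hmem | hgt : n = s - k - 1 ∨ (s - k ≤ n ∧ n < s + (r - l) + k) ∨
          n = s + (r - l) + k := by lia
      · exact apply_eq_zero_of_formalProduct_eq_zero hr (hg _) fun m hm hne ↦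
          ih _ (by have := hlr m hm; lia)
      · exact ih n hmem
      · exact apply_eq_zero_of_formalProduct_eq_zero hl (hg _) fun m hm hne ↦
          ih _ (by have := hlr m hm; lia)
  have hlr' : l ≤ r := (hlr l (Finsupp.mem_support_iff.2 hl)).2
  exact window ((n - s).natAbs + 1) n (by simp only [Set.mem_Ico]; lia)

lemma exists_translate_eq_on_window {α : Type*} {g : ℤ → α} (hg : (Set.range g).Finite) (L : ℤ) :
    ∃ s p : ℤ, p ≠ 0 ∧ ∀ n ∈ Set.Ico s (s + L), g (n + p) = g n := by
  have : Finite (Set.range g) := hg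
  obtain ⟨s, t, hst, heq⟩ := Finite.exists_ne_map_eq_of_infinite
    fun (s : ℤ) (i : Finset.Ico 0 L) ↦ Set.rangeFactorization g (s + i)
  refine ⟨s, t - s, sub_ne_zero.2 hst.symm, fun n hn ↦ ?_⟩
  rw [Set.mem_Ico] at hn
  have hval := congrArg Subtype.val (congrFun heq ⟨n - s, Finset.mem_Ico.2 (by lia)⟩)
  simp only [Set.rangeFactorization_coe, add_sub_cancel] at hval
  rw [hval]
  congr 1
  ring

theorem exists_periodic_of_formalProduct_eq_const [Ring R] [NoZeroDivisors R] {h : ℤ →₀ R}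
    {g : ℤ → R} {K : R} (hh : h ≠ 0) (hg : (Set.range g).Finite)
    (hK : ∀ n, formalProduct h g n = K) : ∃ p ≠ 0, Function.Periodic g p := by
  have hne := Finsupp.support_nonempty_iff.2 hh
  obtain ⟨s, p, hp, hwin⟩ := exists_translate_eq_on_window hg
    (h.support.max' hne - h.support.min' hne)
  refine ⟨p, hp, fun n ↦ sub_eq_zero.1 ?_⟩
  refine eq_zero_of_recurrence_of_eq_zero_on_window (g := fun n ↦ g (n + p) - g n)
    (Finsupp.mem_support_iff.1 (h.support.min'_mem hne))
    (Finsupp.mem_support_iff.1 (h.support.max'_mem hne))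
    (fun m hm ↦ ⟨h.support.min'_le m hm, h.support.le_max' m hm⟩) (fun n ↦ ?_)
    (fun n hn ↦ sub_eq_zero.2 (hwin n hn)) n
  rw [formalProduct_sub, formalProduct_translate, hK, hK, sub_self]

theorem exists_periodic_or_periodic_of_formalProduct_mul_eq_const [CommRing R] [NoZeroDivisors R]
    {f : ℤ × ℤ →₀ R} {u v : ℤ → R} {K : R} (hf : f ≠ 0) (hu : (Set.range u).Finite)
    (hv : (Set.range v).Finite) (hK : ∀ n, formalProduct f (fun n ↦ u n.1 * v n.2) n = K) :
    ∃ p ≠ 0, Function.Periodic u p ∨ Function.Periodic v p := by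
  by_cases hrows : ∀ x y, formalProduct (f.curry x) v y = 0
  · obtain ⟨⟨x, y⟩, hxy⟩ := Finsupp.ne_iff.1 hf
    have hrow : f.curry x ≠ 0 := Finsupp.ne_iff.2 ⟨y, hxy⟩
    obtain ⟨p, hp, hper⟩ := exists_periodic_of_formalProduct_eq_const hrow hv (hrows x)
    exact ⟨p, hp, .inr hper⟩
  · push Not at hrows
    obtain ⟨x, y, hxy⟩ := hrows
    obtain ⟨p, hp, hper⟩ := exists_periodic_of_formalProduct_eq_const (Finsupp.ne_iff.2 ⟨x, hxy⟩) hu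
      fun n ↦ (formalProduct_mul f u v n y).symm.trans (hK (n, y))
    exact ⟨p, hp, .inl hper⟩

end Recurrence

section FourDot

lemma eq_add_of_mixed_difference_eq_zero {A : Type*} [AddCommGroup A] {c : ℤ × ℤ → A}
    (hc : ∀ i j, c (i + 1, j + 1) - c (i, j + 1) = c (i + 1, j) - c (i, j)) (i j : ℤ) :
    c (i, j) = c (i, 0) + (c (0, j) - c (0, 0)) := by
  have hcol (i j : ℤ) : c (i + 1, j) - c (i, j) = c (i + 1, 0) - c (i, 0) := by
    have hper : Function.Periodic (fun j ↦ c (i + 1, j) - c (i, j)) 1 := hc i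
    simpa using hper.int_mul_eq j
  have hrow : Function.Periodic (fun i ↦ c (i, j) - c (i, 0)) 1 := fun i ↦
    sub_eq_sub_iff_sub_eq_sub.1 (hcol i j)
  have hrow₀ : c (i, j) - c (i, 0) = c (0, j) - c (0, 0) := by simpa using hrow.int_mul_eq i
  exact sub_eq_iff_eq_add'.1 hrow₀

lemma exists_add_of_four_dot {c : ℤ × ℤ → ZMod 2}
    (hc : ∀ i j : ℤ, c (i, j) + c (i + 1, j) + c (i, j + 1) + c (i + 1, j + 1) = 0) :
    ∃ a b : ℤ → ZMod 2, ∀ n, c n = a n.1 + b n.2 := by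
  have char_two : ∀ x y z w : ZMod 2, x + y + z + w = 0 → w - z = y - x := by decide
  exact ⟨fun i ↦ c (i, 0), fun j ↦ c (0, j) - c (0, 0), fun n ↦
    eq_add_of_mixed_difference_eq_zero (fun i j ↦ char_two _ _ _ _ (hc i j)) n.1 n.2⟩

/-- The character `x ↦ (-1) ^ x` of `ZMod 2`, with values in an arbitrary ring. -/
def signChar (R : Type*) [CommRing R] : AddChar (ZMod 2) R :=
  AddChar.zmodChar 2 (neg_one_sq (R := R))

variable {R : Type*} [CommRing R]

lemma signChar_apply (x : ZMod 2) : signChar R x = 1 - 2 * (x.val : R) := by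
  rw [signChar, AddChar.zmodChar_apply]
  obtain h | h : x.val = 0 ∨ x.val = 1 := by have := x.val_lt; lia
  · simp [h]
  · rw [h]
    norm_num

lemma signChar_injective [NeZero (2 : R)] : Function.Injective (signChar R) := by
  have hne : signChar R 0 ≠ signChar R 1 := fun h ↦ two_ne_zero (α := R) <| by
    simpa [signChar_apply, ZMod.val_one] using sub_eq_zero.2 h
  have eq_zero_or_one : ∀ z : ZMod 2, z = 0 ∨ z = 1 := by decide
  intro x y hxy
  obtain rfl | rfl := eq_zero_or_one x <;> obtain rfl | rfl := eq_zero_or_one y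
  exacts [rfl, absurd hxy hne, absurd hxy.symm hne, rfl]

lemma finite_range_signChar_comp {ι : Type*} (a : ι → ZMod 2) :
    (Set.range (signChar R ∘ a)).Finite :=
  (Set.finite_range (signChar R)).subset (Set.range_comp_subset_range a _)

lemma formalProduct_signChar {G : Type*} [AddGroup G] (f : G →₀ R) (c : G → ZMod 2) (n : G) :
    formalProduct f (fun k ↦ signChar R (c k)) n =
      (f.sum fun _ a ↦ a) - 2 * formalProduct f (fun k ↦ ((c k).val : R)) n := by
  simp only [formalProduct, signChar_apply, Finsupp.mul_sum, ← Finsupp.sum_sub]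
  exact Finsupp.sum_congr fun m _ ↦ by ring

theorem four_dot_int_annihilator_periodic_general [NoZeroDivisors R] [NeZero (2 : R)]
    (c : ℤ × ℤ → ZMod 2)
    (hc : ∀ i j : ℤ, c (i, j) + c (i + 1, j) + c (i, j + 1) + c (i + 1, j + 1) = 0)
    (h : ∃ f : LP R, f ≠ 0 ∧ Annihilates f (fun n ↦ ((c n).val : R))) :
    ∃ p : ℤ, IsPeriodVector c (p, 0) ∨ IsPeriodVector c (0, p) := by
  obtain ⟨f, hf, hann⟩ := h
  obtain ⟨a, b, hab⟩ := exists_add_of_four_dot hc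
  have hf' : f.coeff ≠ 0 := by simpa using hf
  have hprod (n : ℤ × ℤ) : formalProduct f.coeff
      (fun n ↦ (signChar R ∘ a) n.1 * (signChar R ∘ b) n.2) n = f.coeff.sum fun _ r ↦ r := by
    have hsign := formalProduct_signChar f.coeff c n
    rw [annihilates_iff_formalProduct_eq_zero.1 hann n, mul_zero, sub_zero] at hsign
    simpa only [hab, AddChar.map_add_eq_mul, Function.comp_apply] using hsign
  obtain ⟨p, hp, ha | hb⟩ := exists_periodic_or_periodic_of_formalProduct_mul_eq_const hf'
    (finite_range_signChar_comp a) (finite_range_signChar_comp b) hprod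
  · refine ⟨p, .inl ⟨by simpa using hp, fun n ↦ ?_⟩⟩
    simpa [hab] using signChar_injective (ha n.1)
  · refine ⟨p, .inr ⟨by simpa using hp, fun n ↦ ?_⟩⟩
    simpa [hab] using signChar_injective (hb n.2)

end FourDot

/-- a 4-dot configuration with a nontrivial annihilator over ℤ is periodic. -/
theorem four_dot_int_annihilator_periodic (c : ℤ × ℤ → ZMod 2)
    (hc : ∀ i j : ℤ, c (i, j) + c (i + 1, j) + c (i, j + 1) + c (i + 1, j + 1) = 0)
    (h : ∃ f : LP ℤ, f ≠ 0 ∧ Annihilates f (fun n => ((c n).val : ℤ))) :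
    Periodic c := by
  obtain ⟨p, hp | hp⟩ := four_dot_int_annihilator_periodic_general c hc h
  exacts [⟨(p, 0), hp⟩, ⟨(0, p), hp⟩]
end

section
/- There exists a configuration c : ℤ² → F₂ that satisfies c(i,j) + c(i+2,j) + c(i,j+2) + c(i+2,j+2) = 0 for all (i,j) ∈ ℤ² (i.e., c is annihilated by (1+X²)(1+Y²) over F₂), is not periodic, and has low complexity: there is a finite nonempty D ⊆ ℤ² such that the number of distinct D-patterns of c is strictly less than |D|. -/
/-!
Place a dotted horizontal line on the sublattice `nℤ × nℤ` and a dotted vertical line on its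
translate by `(1, 1)`. The first is killed by `1 - Xⁿ` and the second by `1 - Yⁿ`, so their sum
is killed by the product. A period would have to preserve both lines, and there is none.
Seen through a shape `D` contained in the sublattice, however, the two lines are never visible
together: a `D`-pattern is empty, a row of `D` or a column of `D`. For a 3 × 3 grid this gives at
most 1 + 3 + 3 < 9 patterns.
-/

theorem mixed_difference_add_eq_zero {A : Type*} [AddCommGroup A] {h v : ℤ × ℤ → A} {m n : ℤ}
    (hh : ∀ i j, h (i + m, j) = h (i, j)) (hv : ∀ i j, v (i, j + n) = v (i, j)) (i j : ℤ) :
    (h + v) (i, j) - (h + v) (i + m, j) - (h + v) (i, j + n) + (h + v) (i + m, j + n) = 0 := by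
  simp only [Pi.add_apply, hh, hv]
  abel

/-- The horizontal line `ℤ × {0}` within the sublattice `nℤ × nℤ`. -/
def dottedRow (n : ℤ) : Set (ℤ × ℤ) := {p | n ∣ p.1 ∧ p.2 = 0}

/-- The vertical line `{1} × ℤ` within the coset `(1, 1) + nℤ × nℤ`. -/
def dottedColumn (n : ℤ) : Set (ℤ × ℤ) := {p | p.1 = 1 ∧ n ∣ p.2 - 1}

/-- The configuration marking a dotted row and a dotted column on different cosets of `nℤ × nℤ`.
It is a sum of indicators, not the indicator of the union, to display it as a sum of two periodic
configurations; the two differ only when `n` is a unit. -/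
noncomputable def crossConfig (R : Type*) [AddCommGroupWithOne R] (n : ℤ) : ℤ × ℤ → R :=
  (dottedRow n).indicator 1 + (dottedColumn n).indicator 1

/-- The pattern on `D` marking the points where `f` takes the value `k`. For `f` a coordinate
projection of `ℤ × ℤ` these are the columns and rows of `D`. -/
def levelPattern {α β : Type*} [DecidableEq β] (R : Type*) [Zero R] [One R] (D : Finset α)
    (f : α → β) (k : β) : D → R :=
  fun d => if f d = k then 1 else 0

theorem levelPattern_mem_insert_zero {α β : Type*} [DecidableEq β] (R : Type*) [Zero R] [One R]
    (D : Finset α) (f : α → β) (k : β) :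
    levelPattern R D f k ∈ insert 0 (levelPattern R D f '' (D.image f)) := by
  by_cases hk : k ∈ D.image f
  · exact .inr ⟨k, hk, rfl⟩
  · refine .inl (funext fun d => if_neg ?_)
    rintro rfl
    exact hk (Finset.mem_image_of_mem f d.2)

section crossConfig

variable {R : Type*} [AddCommGroupWithOne R] {n : ℤ}

theorem mixed_difference_crossConfig (i j : ℤ) :
    crossConfig R n (i, j) - crossConfig R n (i + n, j) - crossConfig R n (i, j + n) +
      crossConfig R n (i + n, j + n) = 0 := by
  refine mixed_difference_add_eq_zero (fun i j => ?_) (fun i j => ?_) i j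
  · exact Set.indicator_eq_indicator (by simp [dottedRow]) rfl
  · exact Set.indicator_eq_indicator (by simp [dottedColumn, add_sub_right_comm]) rfl

theorem crossConfig_of_dvd_fst (hn : ¬IsUnit n) {p : ℤ × ℤ} (hp : n ∣ p.1) :
    crossConfig R n p = if p.2 = 0 then 1 else 0 := by
  have hp_col : p.1 ≠ 1 := fun h => hn (isUnit_of_dvd_one (h ▸ hp))
  simp [crossConfig, Set.indicator, dottedRow, dottedColumn, hp, hp_col]

theorem crossConfig_of_not_dvd_fst {p : ℤ × ℤ} (hp : ¬n ∣ p.1) :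
    crossConfig R n p = if p.1 = 1 ∧ n ∣ p.2 - 1 then 1 else 0 := by
  simp [crossConfig, Set.indicator, dottedRow, dottedColumn, hp]

theorem crossConfig_ne_zero_iff [NeZero (1 : R)] (hn : ¬IsUnit n) {p : ℤ × ℤ} :
    crossConfig R n p ≠ 0 ↔ p ∈ dottedRow n ∪ dottedColumn n := by
  by_cases hp : n ∣ p.1
  · have hp_col : p.1 ≠ 1 := fun h => hn (isUnit_of_dvd_one (h ▸ hp))
    simp [crossConfig_of_dvd_fst hn hp, dottedRow, dottedColumn, hp, hp_col]
  · simp [crossConfig_of_not_dvd_fst hp, dottedRow, dottedColumn, hp]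

theorem not_periodic_crossConfig [NeZero (1 : R)] (hn₀ : n ≠ 0) (hn : ¬IsUnit n) :
    ¬Periodic (crossConfig R n) := by
  rintro ⟨⟨a, b⟩, hne, hper⟩
  have translate {p : ℤ × ℤ} (hp : p ∈ dottedRow n ∪ dottedColumn n) :
      p + (a, b) ∈ dottedRow n ∪ dottedColumn n := by
    rwa [← crossConfig_ne_zero_iff (R := R) hn, hper, crossConfig_ne_zero_iff hn]
  have origin : (0, 0) + (a, b) ∈ dottedRow n ∪ dottedColumn n :=
    translate (.inl ⟨dvd_zero n, rfl⟩)
  have next_in_row : (n, 0) + (a, b) ∈ dottedRow n ∪ dottedColumn n :=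
    translate (.inl ⟨dvd_rfl, rfl⟩)
  have corner : (1, 1) + (a, b) ∈ dottedRow n ∪ dottedColumn n :=
    translate (.inr ⟨rfl, by simp⟩)
  simp only [dottedRow, dottedColumn, Set.mem_union, Set.mem_ofPred_eq, Prod.mk_add_mk,
    zero_add] at origin next_in_row corner
  rcases origin with ⟨-, rfl⟩ | ⟨rfl, -⟩
  · have ha : a = 0 := by omega
    exact hne (Prod.ext ha rfl)
  · rcases next_in_row with ⟨hdvd, -⟩ | ⟨hn_add, -⟩
    · exact hn (isUnit_of_dvd_one ((dvd_add_right dvd_rfl).1 hdvd))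
    · omega

variable {D : Finset (ℤ × ℤ)}

theorem patterns_crossConfig_subset (hn : ¬IsUnit n) (hD : ∀ d ∈ D, n ∣ d.1 ∧ n ∣ d.2) :
    Patterns (crossConfig R n) D ⊆
      insert 0 (levelPattern R D Prod.fst '' (D.image Prod.fst)) ∪
        insert 0 (levelPattern R D Prod.snd '' (D.image Prod.snd)) := by
  rintro _ ⟨t, rfl⟩
  by_cases hrow : n ∣ t.1
  · right
    have hpattern (d : D) : crossConfig R n (t + d) = levelPattern R D Prod.snd (-t.2) d := by
      have hd : n ∣ (t + d.1).1 := dvd_add hrow (hD d d.2).1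
      simp only [crossConfig_of_dvd_fst hn hd, levelPattern, Prod.snd_add, add_eq_zero_iff_eq_neg']
    simpa only [hpattern] using levelPattern_mem_insert_zero R D Prod.snd (-t.2)
  · left
    have hpattern (d : D) : crossConfig R n (t + d) =
        if n ∣ t.2 - 1 then levelPattern R D Prod.fst (1 - t.1) d else 0 := by
      have hd : ¬n ∣ (t + d.1).1 := by rwa [Prod.fst_add, dvd_add_left (hD d d.2).1]
      have hcol : n ∣ (t + d.1).2 - 1 ↔ n ∣ t.2 - 1 := by
        rw [Prod.snd_add, add_sub_right_comm, dvd_add_left (hD d d.2).2]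
      simp only [crossConfig_of_not_dvd_fst hd, hcol, Prod.fst_add, ← eq_sub_iff_add_eq',
        levelPattern, ← ite_and, and_comm]
    simp only [hpattern]
    by_cases hcol : n ∣ t.2 - 1
    · simpa only [if_pos hcol] using levelPattern_mem_insert_zero R D Prod.fst (1 - t.1)
    · simp only [if_neg hcol]
      exact .inl rfl

theorem encard_patterns_crossConfig_le (hn : ¬IsUnit n) (hD : ∀ d ∈ D, n ∣ d.1 ∧ n ∣ d.2) :
    (Patterns (crossConfig R n) D).encard ≤
      (D.image Prod.fst).card + (D.image Prod.snd).card + 1 := by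
  have hsubset := patterns_crossConfig_subset (R := R) hn hD
  rw [← Set.insert_union_distrib] at hsubset
  calc (Patterns (crossConfig R n) D).encard
      ≤ (levelPattern R D Prod.fst '' (D.image Prod.fst) ∪
          levelPattern R D Prod.snd '' (D.image Prod.snd)).encard + 1 :=
        (Set.encard_le_encard hsubset).trans (Set.encard_insert_le _ _)
    _ ≤ (levelPattern R D Prod.fst '' (D.image Prod.fst)).encard +
          (levelPattern R D Prod.snd '' (D.image Prod.snd)).encard + 1 := by
        gcongr
        exact Set.encard_union_le _ _
    _ ≤ (D.image Prod.fst).card + (D.image Prod.snd).card + 1 := by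
        simp only [← Set.encard_coe_eq_coe_finsetCard]
        gcongr <;> exact Set.encard_image_le _ _

end crossConfig

theorem square_sublattice_counterexample_general (R : Type*) [AddCommGroupWithOne R]
    [NeZero (1 : R)] {n : ℤ} (hn₀ : n ≠ 0) (hn : ¬IsUnit n) :
    ∃ c : ℤ × ℤ → R,
      (∀ i j : ℤ, c (i, j) - c (i + n, j) - c (i, j + n) + c (i + n, j + n) = 0) ∧
      ¬Periodic c ∧
      ∃ D : Finset (ℤ × ℤ), D.Nonempty ∧ (Patterns c D).encard < D.card := by
  let s : Finset ℤ := (Finset.Icc 0 2).image (n * ·)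
  have hs_card : s.card = 3 := Finset.card_image_of_injective _ (mul_right_injective₀ hn₀)
  have hs_nonempty : s.Nonempty := Finset.card_pos.1 (by omega)
  have hs_dvd : ∀ x ∈ s, n ∣ x := Finset.forall_mem_image.2 fun k _ => dvd_mul_right n k
  have hD : ∀ d ∈ s ×ˢ s, n ∣ d.1 ∧ n ∣ d.2 := fun d hd =>
    (Finset.mem_product.1 hd).imp (hs_dvd _) (hs_dvd _)
  refine ⟨crossConfig R n, mixed_difference_crossConfig, not_periodic_crossConfig hn₀ hn,
    s ×ˢ s, hs_nonempty.product hs_nonempty, ?_⟩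
  calc (Patterns (crossConfig R n) (s ×ˢ s)).encard
      ≤ ((s ×ˢ s).image Prod.fst).card + ((s ×ˢ s).image Prod.snd).card + 1 :=
        encard_patterns_crossConfig_le hn hD
    _ = 3 + 3 + 1 := by
        rw [Finset.product_image_fst hs_nonempty, Finset.product_image_snd hs_nonempty, hs_card]
        rfl
    _ < (s ×ˢ s).card := by
        rw [Finset.card_product, hs_card]
        norm_num

/-- the subshift of (1+X²)(1+Y²) contains a non-periodic low complexity
configuration. -/
theorem square_sublattice_counterexample :
    ∃ c : ℤ × ℤ → ZMod 2,
      (∀ i j : ℤ, c (i, j) + c (i + 2, j) + c (i, j + 2) + c (i + 2, j + 2) = 0) ∧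
      ¬ Periodic c ∧
      ∃ D : Finset (ℤ × ℤ), D.Nonempty ∧ (Patterns c D).ncard < D.card := by
  obtain ⟨c, hc, hper, D, hD, hlt⟩ :=
    square_sublattice_counterexample_general (ZMod 2) two_ne_zero Int.prime_two.not_isUnit
  rw [← (Set.toFinite (Patterns c D)).cast_ncard_eq] at hlt
  exact ⟨c, by simpa only [CharTwo.sub_eq_add] using hc, hper, D, hD, Nat.cast_lt.1 hlt⟩
end

section
/- Let R be a finite field, let u ∈ ℤ²∖{0}, and let c : ℤ² → R be a configuration annihilated by a line polynomial in direction u over R. Then c is periodic in direction u: some nonzero integer multiple of u is a period vector of c. -/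
/-!
A polynomial `p ≠ 0` over a field that is algebraic over a finite field divides `X ^ j - X ^ i` for
some `i < j`: the root adjoined in `AdjoinRoot p` is integral over a finite ring, so it generates a
finite subring and its powers repeat. In Laurent polynomials `X` is invertible, hence every nonzero
one divides some `T k - 1`. Up to a monomial, a line polynomial in direction `u` is a one-variable
Laurent polynomial in the monomial of a primitive vector `v` of the line `ℚ u`, so it divides
the monomial of `k • v` minus one. The annihilators of `c` form an ideal, and so `k • v` and its
multiple `k • u` are periods of `c`.
-/

open AddMonoidAlgebra Polynomial

section PowerCoincidence

theorem exists_lt_pow_eq_pow_of_isIntegral {K A : Type*} [CommRing K] [Finite K] [Ring A]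
    [Algebra K A] {a : A} (ha : IsIntegral K a) : ∃ i j : ℕ, i < j ∧ a ^ i = a ^ j := by
  have : Module.Finite K (Algebra.adjoin K {a}) := .of_fg ha.fg_adjoin_singleton
  have : Finite (Algebra.adjoin K {a}) := Module.finite_of_finite K
  let b : Algebra.adjoin K {a} := ⟨a, Algebra.self_mem_adjoin_singleton K a⟩
  obtain ⟨i, j, hij, hpow⟩ := Finite.exists_ne_map_eq_of_infinite (b ^ · : ℕ → _)
  have hpow' : a ^ i = a ^ j := congrArg Subtype.val hpow
  exact hij.lt_or_gt.elim (⟨i, j, ·, hpow'⟩) (⟨j, i, ·, hpow'.symm⟩)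

variable (K : Type*) {R : Type*} [CommRing K] [Finite K]

theorem exists_lt_dvd_X_pow_sub_X_pow [CommRing R] [Algebra K R] [Algebra.IsIntegral K R]
    {p : R[X]} (hp : IsUnit p.leadingCoeff) : ∃ i j : ℕ, i < j ∧ p ∣ X ^ j - X ^ i := by
  have hroot : IsIntegral R (AdjoinRoot.root p) :=
    ⟨hp.unit⁻¹ • p, monic_of_isUnit_leadingCoeff_inv_smul hp, by
      rw [Units.smul_def, eval₂_smul, AdjoinRoot.algebraMap_eq, AdjoinRoot.eval₂_root, mul_zero]⟩
  obtain ⟨i, j, hij, hpow⟩ := exists_lt_pow_eq_pow_of_isIntegral (isIntegral_trans (R := K) _ hroot)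
  refine ⟨i, j, hij, AdjoinRoot.mk_eq_mk.1 ?_⟩
  rw [map_pow, map_pow, AdjoinRoot.mk_X, hpow]

open LaurentPolynomial in
theorem exists_dvd_T_sub_one [Field R] [Algebra K R] [Algebra.IsIntegral K R]
    {f : R[T;T⁻¹]} (hf : f ≠ 0) : ∃ k : ℤ, k ≠ 0 ∧ f ∣ T k - 1 := by
  obtain ⟨n, p, hp⟩ := exists_T_pow f
  have hp0 : p ≠ 0 := by
    rwa [← toLaurent_ne_zero, hp, ne_eq, (isUnit_T n).mul_left_eq_zero]
  obtain ⟨i, j, hij, hdvd⟩ := exists_lt_dvd_X_pow_sub_X_pow K (leadingCoeff_ne_zero.2 hp0).isUnit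
  refine ⟨j - i, by lia, ?_⟩
  have hfactor : toLaurent (X ^ j - X ^ i : R[X]) = (T (j - i) - 1) * T i := by
    rw [map_sub, toLaurent_X_pow, toLaurent_X_pow, sub_mul, ← T_add, sub_add_cancel, one_mul]
  calc f ∣ toLaurent p := hp ▸ dvd_mul_right f _
    _ ∣ (T (j - i) - 1) * T i := hfactor ▸ map_dvd _ hdvd
    _ ∣ T (j - i) - 1 := (isUnit_T i).mul_right_dvd.2 dvd_rfl

end PowerCoincidence

section GroupAlgebra

theorem exists_eq_single_mul_mapDomainRingHom {R G H : Type*} [Semiring R] [AddMonoid G]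
    [AddMonoid H] {φ : G →+ H} {f : AddMonoidAlgebra R H} {m₀ : H}
    (hf : ∀ m ∈ f.coeff.support, ∃ n, m₀ + φ n = m) :
    ∃ g, f = single m₀ 1 * mapDomainRingHom R φ g := by
  choose! n hn using hf
  refine ⟨∑ m ∈ f.coeff.support, single (n m) (f.coeff m), ?_⟩
  calc f = ∑ m ∈ f.coeff.support, single m (f.coeff m) := (sum_coeff_single f).symm
    _ = ∑ m ∈ f.coeff.support, single (m₀ + φ (n m)) (f.coeff m) :=
      Finset.sum_congr rfl fun m hm => by rw [hn m hm]
    _ = _ := by simp [Finset.mul_sum, single_mul_single]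

theorem exists_dvd_single_zsmul_sub_one (K : Type*) {R G : Type*} [CommRing K] [Finite K]
    [Field R] [Algebra K R] [Algebra.IsIntegral K R] [AddCommGroup G] {v m₀ : G}
    {f : AddMonoidAlgebra R G} (hf₀ : f ≠ 0)
    (hf : ∀ m ∈ f.coeff.support, ∃ n : ℤ, m₀ + n • v = m) :
    ∃ k : ℤ, k ≠ 0 ∧ f ∣ single (k • v) 1 - 1 := by
  let φ : ℤ →+ G := zmultiplesHom G v
  obtain ⟨g, rfl⟩ : ∃ g, f = single m₀ 1 * mapDomainRingHom R φ g :=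
    exists_eq_single_mul_mapDomainRingHom hf
  have hg : g ≠ 0 := by
    rintro rfl
    exact hf₀ (by rw [map_zero, mul_zero])
  obtain ⟨k, hk, hdvd⟩ := exists_dvd_T_sub_one K hg
  have hunit : IsUnit (single m₀ 1 : AddMonoidAlgebra R G) :=
    .of_mul_eq_one (single (-m₀) 1) (by simp [single_mul_single, one_def])
  refine ⟨k, hk, hunit.mul_left_dvd.2 ?_⟩
  have hmap : mapDomainRingHom R φ (LaurentPolynomial.T k - 1) = single (k • v) 1 - 1 := by
    rw [map_sub, map_one, LaurentPolynomial.T, mapDomainRingHom_apply, mapDomain_single]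
    rfl
  exact hmap ▸ map_dvd (mapDomainRingHom R φ) hdvd

end GroupAlgebra

section Line

theorem exists_mem_zmultiples_of_rational_multiple (u : ℤ × ℤ) :
    ∃ v : ℤ × ℤ, ∀ w : ℤ × ℤ, (∃ r : ℚ, (w.1 : ℚ) = r * u.1 ∧ (w.2 : ℚ) = r * u.2) →
      w ∈ AddSubgroup.zmultiples v := by
  obtain ⟨x, y, hx, hy, hxy⟩ := extract_gcd u.1 u.2
  obtain ⟨a, b, hab⟩ := (gcd_isUnit_iff x y).1 hxy
  generalize gcd u.1 u.2 = g at hx hy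
  have hab' : (a * x + b * y : ℚ) = 1 := mod_cast hab
  have hx' : (u.1 : ℚ) = g * x := mod_cast hx
  have hy' : (u.2 : ℚ) = g * y := mod_cast hy
  refine ⟨(x, y), fun w ⟨r, hw₁, hw₂⟩ => ⟨a * w.1 + b * w.2, ?_⟩⟩
  have hcoeff : (a * w.1 + b * w.2 : ℚ) = r * g := by
    linear_combination a * hw₁ + b * hw₂ + a * r * hx' + b * r * hy' + r * g * hab'
  ext
  · have : (a * w.1 + b * w.2 : ℚ) * x = w.1 := by linear_combination x * hcoeff - hw₁ - r * hx'
    exact_mod_cast this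
  · have : (a * w.1 + b * w.2 : ℚ) * y = w.2 := by linear_combination y * hcoeff - hw₂ - r * hy'
    exact_mod_cast this

namespace IsLinePoly

variable {R : Type*} [CommRing R] {u : ℤ × ℤ} {f : LP R}

theorem ne_zero (hf : IsLinePoly u f) : f ≠ 0 := by
  rintro rfl
  simpa using hf.1

theorem direction_ne_zero_s19 (hf : IsLinePoly u f) : u ≠ 0 := by
  rintro rfl
  obtain ⟨hcard, n, hn⟩ := hf
  have heq : ∀ m ∈ f.coeff.support, m = n := fun m hm => by
    obtain ⟨r, h₁, h₂⟩ := hn m hm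
    ext
    · simpa using h₁
    · simpa using h₂
  exact hcard.not_ge (Finset.card_le_one.2 fun a ha b hb => (heq a ha).trans (heq b hb).symm)

theorem exists_support_subset_coset (hf : IsLinePoly u f) :
    ∃ (v m₀ : ℤ × ℤ) (d : ℤ), d • v = u ∧ ∀ m ∈ f.coeff.support, ∃ n : ℤ, m₀ + n • v = m := by
  obtain ⟨-, m₀, hline⟩ := hf
  obtain ⟨v, hv⟩ := exists_mem_zmultiples_of_rational_multiple u
  obtain ⟨d, hd⟩ := hv u ⟨1, by simp⟩
  refine ⟨v, m₀, d, hd, fun m hm => ?_⟩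
  obtain ⟨r, h₁, h₂⟩ := hline m hm
  obtain ⟨n, hn⟩ := hv (m - m₀) ⟨r, by simp [h₁], by simp [h₂]⟩
  exact ⟨n, add_eq_of_eq_sub' hn⟩

end IsLinePoly

end Line

section Convolution

variable (R M : Type*) {G : Type*} [CommSemiring R] [AddCommMonoid M] [Module R M] [AddCommGroup G]

/-- The action of the group algebra on configurations by convolution, under which `single v 1`
translates by `v`. For `G = ℤ × ℤ` and `M = R` it is multiplication of the formal power series with
coefficients `c` by a Laurent polynomial. -/
noncomputable def convolution : AddMonoidAlgebra R G →ₐ[R] Module.End R (G → M) :=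
  AddMonoidAlgebra.lift R _ G
    { toFun := fun v => LinearMap.funLeft R M (· - v.toAdd)
      map_one' := by ext; simp [LinearMap.funLeft_apply]
      map_mul' := fun v w => by ext; simp [LinearMap.funLeft, sub_sub] }

variable {R M}

theorem convolution_apply (f : AddMonoidAlgebra R G) (c : G → M) (n : G) :
    convolution R M f c n = ∑ m ∈ f.coeff.support, f.coeff m • c (n - m) := by
  simp [convolution, AddMonoidAlgebra.lift_apply, Finsupp.sum, LinearMap.funLeft_apply]

theorem convolution_single (v : G) (a : R) (c : G → M) (n : G) :
    convolution R M (single v a) c n = a • c (n - v) := by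
  simp [convolution, LinearMap.funLeft_apply]

theorem annihilates_iff_convolution_eq_zero {R : Type*} [CommRing R] {f : LP R} {c : ℤ × ℤ → R} :
    Annihilates f c ↔ convolution R R f c = 0 := by
  simp [Annihilates, funext_iff, convolution_apply]

theorem Annihilates.of_dvd {R : Type*} [CommRing R] {f g : LP R} {c : ℤ × ℤ → R}
    (hf : Annihilates f c) (hfg : f ∣ g) : Annihilates g c := by
  obtain ⟨h, rfl⟩ := hfg
  rw [annihilates_iff_convolution_eq_zero] at hf ⊢
  rw [mul_comm, map_mul, Module.End.mul_apply, hf, map_zero]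

theorem annihilates_single_sub_one_iff {R : Type*} [CommRing R] {v : ℤ × ℤ} {c : ℤ × ℤ → R} :
    Annihilates (single v 1 - 1) c ↔ Function.Periodic c v := by
  rw [annihilates_iff_convolution_eq_zero, map_sub, map_one, LinearMap.sub_apply, sub_eq_zero,
    funext_iff, (Equiv.subRight v).forall_congr_left]
  simp [convolution_single, Function.Periodic, eq_comm]

end Convolution

theorem line_poly_annihilator_periodic_general (K : Type*) {R : Type*} [CommRing K] [Finite K]
    [Field R] [Algebra K R] [Algebra.IsIntegral K R] (u : ℤ × ℤ) (c : ℤ × ℤ → R) (f : LP R)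
    (hf : IsLinePoly u f) (hc : Annihilates f c) :
    ∃ k : ℤ, k ≠ 0 ∧ IsPeriodVector c (k • u) := by
  obtain ⟨v, m₀, d, hdv, hsupp⟩ := hf.exists_support_subset_coset
  obtain ⟨k, hk, hdvd⟩ := exists_dvd_single_zsmul_sub_one K hf.ne_zero hsupp
  have hperiod : Function.Periodic c (k • v) := annihilates_single_sub_one_iff.1 (hc.of_dvd hdvd)
  refine ⟨k, hk, smul_ne_zero hk hf.direction_ne_zero_s19, ?_⟩
  rw [← hdv, smul_comm]
  exact hperiod.zsmul d

/-- over a finite field, a configuration annihilated by a line polynomial in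
direction u is periodic in direction u. -/
theorem line_poly_annihilator_periodic {R : Type*} [Field R] [Fintype R]
    (u : ℤ × ℤ) (hu : u ≠ 0) (c : ℤ × ℤ → R) (f : LP R)
    (hf : IsLinePoly u f) (hc : Annihilates f c) :
    ∃ k : ℤ, k ≠ 0 ∧ IsPeriodVector c (k • u) :=
  line_poly_annihilator_periodic_general R u c f hf hc
end
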